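/- arXiv:1310.7767 — 4 statements merged into one kernel-verified Lean document; each statement's English description precedes it below -/
import Mathlib

section
/- Let f be a standard solution family and let K = 2·∫₀¹ √(1 − t³) dt. Then for every δ > 0 there exist C > 0 and R > 0 such that for all λ ∈ ℂ with |λ| ≥ R and |arg λ| ≤ π − δ one has |f(0,λ)·λ^{1/4}·e^{−K·λ^{5/6}} − 1| ≤ C·|λ|^{−5/6}, where the powers λ^{1/4}, λ^{5/6} are taken with the principal branch. -/
open Complex

/-- `f : ℂ × ℂ → ℂ` is a standard solution family for `f'' = (z³ + λ) f`:
for each `λ` the map `z ↦ f(z,λ)` is entire and solves the ODE, and it has the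
Liouville–Green asymptotics `f(z,λ) = z^{-3/4} e^{-(2/5) z^{5/2}} (1 + O(z^{-1/2}))`
as `z → ∞` in the sector `|arg z| ≤ 3π/5 - ε`, uniformly for `λ` in compact sets. -/
def IsStdSolutionFamily (f : ℂ → ℂ → ℂ) : Prop :=
  (∀ lam : ℂ, Differentiable ℂ (fun z => f z lam) ∧
    ∀ z : ℂ, deriv (deriv (fun w => f w lam)) z = (z ^ 3 + lam) * f z lam) ∧
  (∀ ε > (0 : ℝ), ∀ L : Set ℂ, IsCompact L →
    ∃ C > (0 : ℝ), ∃ R > (0 : ℝ), ∀ lam ∈ L, ∀ z : ℂ,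
      R ≤ ‖z‖ → |Complex.arg z| ≤ 3 * Real.pi / 5 - ε →
      ‖f z lam * z ^ ((3 : ℂ) / 4) *
          Complex.exp ((2 / 5 : ℂ) * z ^ ((5 : ℂ) / 2)) - 1‖
        ≤ C * ‖z‖ ^ (-(1 / 2) : ℝ))

open Set Filter Topology

theorem mv_bound {h h' : ℝ → ℂ} {B B' : ℝ → ℝ} {c x y : ℝ} (hx : 0 ≤ x) (hxy : x ≤ y)
    (hh : ∀ t, 0 ≤ t → HasDerivAt h (h' t) t) (hB : ∀ t, 0 ≤ t → HasDerivAt B (-B' t) t)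
    (hb : ∀ t, x ≤ t → ‖h' t‖ ≤ c * B' t) : ‖h y - h x‖ ≤ c * (B x - B y) := by
  have := image_norm_le_of_norm_deriv_right_le_deriv_boundary' (a := x) (b := y)
    (f := fun t => h t - h x) (f' := h') (B := fun t => c * (B x - B t)) (B' := fun t => c * B' t)
    (fun t ht => ((hh t (hx.trans ht.1)).sub_const _).continuousAt.continuousWithinAt)
    (fun t ht => ((hh t (hx.trans ht.1)).sub_const _).hasDerivWithinAt) (by simp)
    (fun t ht => by
      have := (((hB t (hx.trans ht.1)).const_sub (B x)).const_mul c)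
      exact this.continuousAt.continuousWithinAt)
    (fun t ht => by
      have := (((hB t (hx.trans ht.1)).const_sub (B x)).const_mul c)
      simpa using this.hasDerivWithinAt)
    (fun t ht => hb t ht.1)
  exact this ⟨hxy, le_rfl⟩

theorem core {u a b S p : ℝ → ℂ} {B B' : ℝ → ℝ} {U : ℂ}
    (hu : ∀ x, 0 ≤ x → 2 * u x = a x * exp (2 * S x) - b x)
    (ha : ∀ x, 0 ≤ x → HasDerivAt a (p x * u x * exp (-(2 * S x))) x)
    (hb : ∀ x, 0 ≤ x → HasDerivAt b (p x * u x) x)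
    (hp : ∀ x, 0 ≤ x → ‖p x‖ ≤ B' x)
    (hB : ∀ x, 0 ≤ x → HasDerivAt B (-B' x) x)
    (hB0 : ∀ x, 0 ≤ x → 0 ≤ B x) (hBt : Tendsto B atTop (𝓝 0)) (hBh : B 0 ≤ 1 / 2)
    (hSm : ∀ x y, 0 ≤ x → x ≤ y → (S x).re ≤ (S y).re)
    (hSt : Tendsto (fun x => (S x).re) atTop atTop)
    (huc : ContinuousOn u (Ici 0)) (hut : Tendsto u atTop (𝓝 U)) :
    ‖u 0 - U‖ ≤ 2 * B 0 * ‖U‖ := by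
  have hB'0 : ∀ x, 0 ≤ x → 0 ≤ B' x := fun x hx => (norm_nonneg _).trans (hp x hx)
  -- boundedness
  obtain ⟨M0, hM0⟩ : ∃ M, ∀ x, 0 ≤ x → ‖u x‖ ≤ M := by
    have h1 : ∀ᶠ x in atTop, ‖u x‖ < ‖U‖ + 1 := hut.norm.eventually_lt_const (by linarith)
    obtain ⟨N, hN⟩ := eventually_atTop.1 h1
    obtain ⟨M, hM⟩ := (isCompact_Icc (a := (0:ℝ)) (b := N)).exists_bound_of_continuousOn
      (huc.mono fun x hx => hx.1)
    refine ⟨max M (‖U‖ + 1), fun x hx => ?_⟩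
    rcases le_total x N with h | h
    · exact (hM x ⟨hx, h⟩).trans (le_max_left _ _)
    · exact (hN x h).le.trans (le_max_right _ _)
  have key : ∀ M, (∀ x, 0 ≤ x → ‖u x‖ ≤ M) → ∀ x, 0 ≤ x → ‖u x - U‖ ≤ M * B x := by
    intro M hM
    have hMn : 0 ≤ M := (norm_nonneg _).trans (hM 0 le_rfl)
    have hbb : ∀ x y, 0 ≤ x → x ≤ y → ‖b y - b x‖ ≤ M * (B x - B y) := by
      intro x y hx hxy
      refine mv_bound hx hxy hb hB fun t ht => ?_
      have ht0 := hx.trans ht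
      rw [norm_mul, mul_comm M]
      exact mul_le_mul (hp t ht0) (hM t ht0) (norm_nonneg _) (hB'0 t ht0)
    have haa : ∀ x y, 0 ≤ x → x ≤ y →
        ‖a y - a x‖ ≤ (M * Real.exp (-(2 * (S x).re))) * (B x - B y) := by
      intro x y hx hxy
      refine mv_bound hx hxy ha hB fun t ht => ?_
      have ht0 := hx.trans ht
      rw [norm_mul, norm_mul, norm_exp]
      have h1 : (-(2 * S t)).re = -(2 * (S t).re) := by simp
      rw [h1]
      have h2 := hSm x t hx ht
      have h3 : ‖p t‖ * ‖u t‖ ≤ B' t * M :=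
        mul_le_mul (hp t ht0) (hM t ht0) (norm_nonneg _) (hB'0 t ht0)
      calc _ ≤ (B' t * M) * Real.exp (-(2 * (S x).re)) := by
            refine mul_le_mul h3 (Real.exp_le_exp.2 (by linarith)) (Real.exp_pos _).le
              (mul_nonneg (hB'0 t ht0) hMn)
        _ = _ := by ring
    -- a → 0
    have hexp : Tendsto (fun x => Real.exp (-(2 * (S x).re))) atTop (𝓝 0) := by
      apply Real.tendsto_exp_neg_atTop_nhds_zero.comp
      exact hSt.const_mul_atTop (by norm_num)
    have hat : Tendsto a atTop (𝓝 0) := by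
      have hbd : ∀ x, 0 ≤ x → ‖a x‖ ≤ (2 * M + ‖b 0‖ + M * B 0) * Real.exp (-(2 * (S x).re)) := by
        intro x hx
        have h1 : a x = (2 * u x + b x) * exp (-(2 * S x)) := by
          rw [hu x hx, sub_add_cancel, mul_assoc, ← exp_add]; simp
        rw [h1, norm_mul, norm_exp]
        have h2 : (-(2 * S x)).re = -(2 * (S x).re) := by simp
        rw [h2]
        gcongr
        have h3 := hbb 0 x le_rfl hx
        have h4 : ‖b x‖ ≤ ‖b 0‖ + ‖b x - b 0‖ := by
          simpa using norm_add_le (b 0) (b x - b 0)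
        have h5 : ‖2 * u x + b x‖ ≤ 2 * ‖u x‖ + ‖b x‖ := by
          simpa using norm_add_le (2 * u x) (b x)
        have h6 := mul_nonneg hMn (hB0 x hx)
        have h7 := hM x hx
        linarith
      refine squeeze_zero_norm' ((eventually_ge_atTop 0).mono hbd) ?_
      simpa using hexp.const_mul (2 * M + ‖b 0‖ + M * B 0)
    have ha2 : ∀ x, 0 ≤ x → ‖a x * exp (2 * S x)‖ ≤ M * B x := by
      intro x hx
      have h1 : ‖a x‖ ≤ (M * Real.exp (-(2 * (S x).re))) * B x := by
        have l1 : Tendsto (fun y => ‖a y - a x‖) atTop (𝓝 ‖0 - a x‖) := (hat.sub_const _).norm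
        have l2 : Tendsto (fun y => (M * Real.exp (-(2 * (S x).re))) * (B x - B y)) atTop
          (𝓝 ((M * Real.exp (-(2 * (S x).re))) * (B x - 0))) := (hBt.const_sub _).const_mul _
        have := le_of_tendsto_of_tendsto l1 l2
          ((eventually_ge_atTop x).mono fun y hy => haa x y hx hy)
        simpa using this
      rw [norm_mul, norm_exp]
      have h2 : (2 * S x).re = (2 * (S x).re) := by simp
      rw [h2]
      calc _ ≤ ((M * Real.exp (-(2 * (S x).re))) * B x) * Real.exp (2 * (S x).re) := by gcongr
        _ = M * B x * (Real.exp (-(2 * (S x).re)) * Real.exp (2 * (S x).re)) := by ring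
        _ = _ := by rw [← Real.exp_add]; simp
    have hbt : Tendsto b atTop (𝓝 (-(2 * U))) := by
      have h1 : Tendsto (fun x => a x * exp (2 * S x)) atTop (𝓝 0) := by
        refine squeeze_zero_norm' ((eventually_ge_atTop 0).mono ha2) ?_
        simpa using hBt.const_mul M
      have h2 := h1.sub (hut.const_mul 2)
      rw [zero_sub] at h2
      refine h2.congr' ((eventually_ge_atTop 0).mono fun x hx => ?_)
      rw [hu x hx]; ring
    intro x hx
    have h1 : ‖-(2 * U) - b x‖ ≤ M * B x := by
      have l1 : Tendsto (fun y => ‖b y - b x‖) atTop (𝓝 ‖-(2 * U) - b x‖) := (hbt.sub_const _).norm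
      have l2 : Tendsto (fun y => M * (B x - B y)) atTop (𝓝 (M * (B x - 0))) :=
        (hBt.const_sub _).const_mul _
      have := le_of_tendsto_of_tendsto l1 l2
        ((eventually_ge_atTop x).mono fun y hy => hbb x y hx hy)
      simpa using this
    have h2 : 2 * (u x - U) = a x * exp (2 * S x) + (-(2 * U) - b x) := by
      rw [mul_sub, hu x hx]; ring
    have h3 : 2 * ‖u x - U‖ ≤ M * B x + M * B x := by
      have : ‖2 * (u x - U)‖ = 2 * ‖u x - U‖ := by simp
      rw [← this, h2]
      exact (norm_add_le _ _).trans (add_le_add (ha2 x hx) h1)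
    linarith
  have hBa : ∀ x, 0 ≤ x → B x ≤ B 0 := by
    intro x hx
    have := mv_bound (h := fun _ => 0) (h' := fun _ => 0) (c := 1) le_rfl hx
      (fun t _ => hasDerivAt_const t 0) hB (fun t ht => by simpa using hB'0 t ht)
    simp at this
    exact this
  -- the best bound
  set M := sSup ((fun x => ‖u x‖) '' Ici 0) with hMdef
  have hbdd : BddAbove ((fun x => ‖u x‖) '' Ici 0) := ⟨M0, by rintro _ ⟨x, hx, rfl⟩; exact hM0 x hx⟩
  have hM : ∀ x, 0 ≤ x → ‖u x‖ ≤ M := fun x hx => le_csSup hbdd ⟨x, hx, rfl⟩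
  have hMn : 0 ≤ M := (norm_nonneg _).trans (hM 0 le_rfl)
  have hM2 : M ≤ ‖U‖ + M * B 0 := by
    apply csSup_le (nonempty_Ici.image _)
    rintro _ ⟨x, hx, rfl⟩
    have h1 := key M hM x hx
    have h2 : ‖u x‖ ≤ ‖U‖ + ‖u x - U‖ := by simpa using norm_add_le U (u x - U)
    have h3 := mul_le_mul_of_nonneg_left (hBa x hx) hMn
    simp only []
    linarith
  have h1 := key M hM 0 le_rfl
  have h0 := hB0 0 le_rfl
  have h4 : M ≤ 2 * ‖U‖ := by nlinarith
  nlinarith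

noncomputable def Qf (l : ℂ) (x : ℝ) : ℂ := (x : ℂ) ^ 3 + l
noncomputable def qf (l : ℂ) (x : ℝ) : ℂ := (Qf l x) ^ ((1 : ℂ) / 2)
noncomputable def Sf (l : ℂ) (x : ℝ) : ℂ := ∫ t in (0:ℝ)..x, qf l t

theorem Q_slit {l : ℂ} (hl : l ∈ slitPlane) {x : ℝ} (hx : 0 ≤ x) : Qf l x ∈ slitPlane := by
  have h : Qf l x = ((x ^ 3 : ℝ) : ℂ) + l := by simp [Qf]
  rw [h, mem_slitPlane_iff]
  rw [mem_slitPlane_iff] at hl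
  have : 0 ≤ x ^ 3 := by positivity
  rcases hl with hl | hl
  · left; rw [add_re, ofReal_re]; linarith
  · right; rw [add_im, ofReal_im]; simpa using hl

theorem Q_ne {l : ℂ} (hl : l ∈ slitPlane) {x : ℝ} (hx : 0 ≤ x) : Qf l x ≠ 0 :=
  slitPlane_ne_zero (Q_slit hl hx)

theorem q_sq (l : ℂ) (x : ℝ) : qf l x ^ 2 = Qf l x := by
  unfold qf
  rw [← cpow_nat_mul]
  norm_num

theorem q_ne {l : ℂ} (hl : l ∈ slitPlane) {x : ℝ} (hx : 0 ≤ x) : qf l x ≠ 0 := by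
  intro h
  have := q_sq l x
  rw [h] at this
  exact Q_ne hl hx (by rw [← this]; simp)

theorem q_re (l : ℂ) (x : ℝ) : 0 ≤ (qf l x).re := by
  unfold qf
  by_cases h : Qf l x = 0
  · simp [h]
  rw [cpow_def_of_ne_zero h, exp_re]
  refine mul_nonneg (Real.exp_pos _).le ?_
  have h1 : (log (Qf l x) * (1 / 2)).im = arg (Qf l x) / 2 := by
    have : (log (Qf l x) * (1 / 2)) = ((1 / 2 : ℝ) : ℂ) * log (Qf l x) := by push_cast; ring
    rw [this, im_ofReal_mul, log_im]; ring
  rw [h1]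
  have h2 := neg_pi_lt_arg (Qf l x)
  have h3 := arg_le_pi (Qf l x)
  exact Real.cos_nonneg_of_mem_Icc ⟨by linarith, by linarith⟩

theorem Q_deriv (l : ℂ) (x : ℝ) : HasDerivAt (Qf l) (3 * (x : ℂ) ^ 2) x := by
  have h : HasDerivAt (fun z : ℂ => z ^ 3 + l) (3 * (x : ℂ) ^ 2) (x : ℂ) := by
    simpa using (hasDerivAt_pow 3 (x : ℂ)).add_const l
  exact h.comp_ofReal

theorem Qpow_deriv {l : ℂ} (hl : l ∈ slitPlane) {x : ℝ} (hx : 0 ≤ x) (c : ℂ) :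
    HasDerivAt (fun t => Qf l t ^ c) (c * (3 * (x : ℂ) ^ 2) * (Qf l x ^ c / Qf l x)) x := by
  have h : HasDerivAt (fun z : ℂ => (z ^ 3 + l) ^ c)
      (c * ((x:ℂ) ^ 3 + l) ^ (c - 1) * (3 * (x : ℂ) ^ 2)) (x : ℂ) := by
    have h0 : HasDerivAt (fun z : ℂ => z ^ 3 + l) (3 * (x : ℂ) ^ 2) (x : ℂ) := by
      simpa using (hasDerivAt_pow 3 (x : ℂ)).add_const l
    exact h0.cpow_const (Q_slit hl hx)
  have h2 := h.comp_ofReal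
  refine HasDerivAt.congr_deriv h2 ?_
  rw [cpow_sub _ _ (show (x:ℂ) ^ 3 + l ≠ 0 from Q_ne hl hx), cpow_one]
  unfold Qf
  ring

theorem q_deriv {l : ℂ} (hl : l ∈ slitPlane) {x : ℝ} (hx : 0 ≤ x) :
    HasDerivAt (qf l) (3 * (x : ℂ) ^ 2 / (2 * qf l x)) x := by
  have := Qpow_deriv hl hx (1 / 2)
  refine HasDerivAt.congr_deriv this ?_
  change 1 / 2 * (3 * (x:ℂ) ^ 2) * (qf l x / Qf l x) = _
  rw [← q_sq]
  have := q_ne hl hx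
  field_simp

theorem q_contOn {l : ℂ} (hl : l ∈ slitPlane) : ContinuousOn (qf l) (Ici 0) := fun _ hx =>
  (q_deriv hl hx).continuousAt.continuousWithinAt

theorem q_ii {l : ℂ} (hl : l ∈ slitPlane) {x y : ℝ} (hx : 0 ≤ x) (hy : 0 ≤ y) :
    IntervalIntegrable (qf l) MeasureTheory.volume x y :=
  ((q_contOn hl).mono (fun t ht => by
    exact (le_min hx hy).trans ht.1)).intervalIntegrable

theorem q_meas (l : ℂ) : Measurable (qf l) := by
  unfold qf Qf
  fun_prop

theorem S_deriv {l : ℂ} (hl : l ∈ slitPlane) {x : ℝ} (hx : 0 ≤ x) :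
    HasDerivAt (Sf l) (qf l x) x :=
  intervalIntegral.integral_hasDerivAt_right (q_ii hl le_rfl hx)
    (q_meas l).stronglyMeasurable.stronglyMeasurableAtFilter (q_deriv hl hx).continuousAt

theorem S_zero (l : ℂ) : Sf l 0 = 0 := by simp [Sf]

theorem S_mono {l : ℂ} (hl : l ∈ slitPlane) (x y : ℝ) (hx : 0 ≤ x) (hxy : x ≤ y) :
    (Sf l x).re ≤ (Sf l y).re := by
  have hd : ∀ t, 0 ≤ t → HasDerivAt (fun t => (Sf l t).re) (qf l t).re t := fun t ht => by
    have := (Complex.reCLM.hasFDerivAt (x := Sf l t)).comp_hasDerivAt t (S_deriv hl ht)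
    exact this
  have : MonotoneOn (fun t => (Sf l t).re) (Ici 0) := by
    apply monotoneOn_of_deriv_nonneg (convex_Ici 0)
    · exact fun t ht => (hd t ht).continuousAt.continuousWithinAt
    · intro t ht; rw [interior_Ici] at ht
      exact (hd t (le_of_lt ht)).differentiableAt.differentiableWithinAt
    · intro t ht; rw [interior_Ici] at ht
      rw [(hd t (le_of_lt ht)).deriv]; exact q_re l t
  exact this hx (hx.trans hxy) hxy

/-- the regularised action -/
noncomputable def Ef (l : ℂ) (X : ℝ) : ℂ := Sf l X - (2 / 5) * X * qf l X

theorem invq_contOn {l : ℂ} (hl : l ∈ slitPlane) : ContinuousOn (fun x => (qf l x)⁻¹) (Ici 0) :=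
  (q_contOn hl).inv₀ fun _ hx => q_ne hl hx

theorem E_eq {l : ℂ} (hl : l ∈ slitPlane) {X : ℝ} (hX : 0 ≤ X) :
    Ef l X = (3 / 5) * l * ∫ t in (0:ℝ)..X, (qf l t)⁻¹ := by
  have hd : ∀ t, 0 ≤ t → HasDerivAt (Ef l) ((3 / 5) * l * (qf l t)⁻¹) t := by
    intro t ht
    have h1 : HasDerivAt (fun t : ℝ => (2 / 5 : ℂ) * t) (2 / 5) t := by
      simpa using (hasDerivAt_id (t:ℂ)).comp_ofReal.const_mul (2 / 5 : ℂ)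
    have := (S_deriv hl ht).sub (h1.mul (q_deriv hl ht))
    refine (this.congr_deriv ?_)
    have hq := q_ne hl ht
    have h2 : (t:ℂ) ^ 3 = qf l t ^ 2 - l := by rw [q_sq]; simp [Qf]
    field_simp
    ring_nf
    rw [h2]; ring
  have hs : uIcc 0 X ⊆ Ici 0 := fun t ht => by
    rw [uIcc_of_le hX] at ht; exact ht.1
  have := intervalIntegral.integral_eq_sub_of_hasDerivAt (a := 0) (b := X)
    (fun t ht => hd t (hs ht))
    ((((invq_contOn hl).mono hs).const_smul ((3 / 5) * l)).intervalIntegrable)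
  rw [intervalIntegral.integral_const_mul] at this
  rw [this]
  simp [Ef, S_zero]

theorem S_param {l : ℂ} (hl : l ∈ slitPlane) {X : ℝ} (hX : 0 ≤ X) :
    HasDerivAt (fun m => Sf m X) (∫ t in (0:ℝ)..X, (1 / 2) * (qf l t)⁻¹) l := by
  obtain ⟨r, hr, hball⟩ := Metric.nhds_basis_closedBall.mem_iff.1 (isOpen_slitPlane.mem_nhds hl)
  have hQc : Continuous (fun p : ℂ × ℝ => Qf p.1 p.2) := by unfold Qf; fun_prop
  have hqc : ContinuousOn (fun p : ℂ × ℝ => (1 / 2) * (qf p.1 p.2)⁻¹)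
      (Metric.closedBall l r ×ˢ Icc 0 X) := by
    refine ContinuousOn.mul continuousOn_const (ContinuousOn.inv₀ ?_ ?_)
    · exact hQc.continuousOn.cpow continuousOn_const (fun p hp => Q_slit (hball hp.1) hp.2.1)
    · exact fun p hp => q_ne (hball hp.1) hp.2.1
  obtain ⟨M, hM⟩ := ((isCompact_closedBall l r).prod isCompact_Icc).exists_bound_of_continuousOn hqc
  have hsub : ∀ t, t ∈ uIoc 0 X → t ∈ Icc 0 X := fun t ht => by
    rw [uIoc_of_le hX] at ht; exact ⟨ht.1.le, ht.2⟩
  refine (intervalIntegral.hasDerivAt_integral_of_dominated_loc_of_deriv_le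
    (F := fun m t => qf m t) (F' := fun m t => (1 / 2) * (qf m t)⁻¹) (bound := fun _ => M)
    (Metric.closedBall_mem_nhds l hr) ?_ (q_ii hl le_rfl hX) ?_ ?_ ?_ ?_).2
  · exact Eventually.of_forall fun m => (q_meas m).aestronglyMeasurable
  · exact ((q_meas l).inv.const_mul _).aestronglyMeasurable
  · exact Eventually.of_forall fun t ht m hm => hM (m, t) ⟨hm, hsub t ht⟩
  · exact intervalIntegrable_const
  · refine Eventually.of_forall fun t ht m hm => ?_
    have h0 : HasDerivAt (fun m : ℂ => (t:ℂ) ^ 3 + m) 1 m := by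
      simpa using (hasDerivAt_id m).const_add ((t:ℂ) ^ 3)
    have hsl := Q_slit (hball hm) (hsub t ht).1
    have := h0.cpow_const (c := 1 / 2) hsl
    refine this.congr_deriv ?_
    rw [cpow_sub _ _ (slitPlane_ne_zero hsl : (t:ℂ)^3 + m ≠ 0), cpow_one]
    change 1 / 2 * (qf m t / Qf m t) * 1 = _
    rw [← q_sq]
    have := q_ne (hball hm) (hsub t ht).1
    field_simp

theorem q_param {l : ℂ} (hl : l ∈ slitPlane) {X : ℝ} (hX : 0 ≤ X) :
    HasDerivAt (fun m => qf m X) ((1 / 2) * (qf l X)⁻¹) l := by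
  have h0 : HasDerivAt (fun m : ℂ => (X:ℂ) ^ 3 + m) 1 l := by
    simpa using (hasDerivAt_id l).const_add ((X:ℂ) ^ 3)
  have hsl := Q_slit hl hX
  have := h0.cpow_const (c := 1 / 2) hsl
  refine this.congr_deriv ?_
  rw [cpow_sub _ _ (slitPlane_ne_zero hsl : (X:ℂ)^3 + l ≠ 0), cpow_one]
  change 1 / 2 * (qf l X / Qf l X) * 1 = _
  rw [← q_sq]
  have := q_ne hl hX
  field_simp

theorem E_param {l : ℂ} (hl : l ∈ slitPlane) {X : ℝ} (hX : 0 ≤ X) :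
    HasDerivAt (fun m => Ef m X) ((5 / 6) * Ef l X / l - (1 / 5) * X * (qf l X)⁻¹) l := by
  have := (S_param hl hX).sub ((q_param hl hX).const_mul ((2 / 5) * (X:ℂ)))
  refine this.congr_deriv ?_
  rw [E_eq hl hX, intervalIntegral.integral_const_mul]
  have := slitPlane_ne_zero hl
  field_simp
  ring

theorem path_slit {l : ℂ} (hl : l ∈ slitPlane) {τ : ℝ} (h0 : 0 ≤ τ) (h1 : τ ≤ 1) :
    exp (τ * log l) ∈ slitPlane := by
  have ha := (mem_slitPlane_iff_arg.1 hl).1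
  have h2 := neg_pi_lt_arg l
  have h3 := lt_of_le_of_ne (arg_le_pi l) ha
  have him : ((τ:ℂ) * log l).im = τ * arg l := by rw [im_ofReal_mul, log_im]
  have hb : -Real.pi < τ * arg l ∧ τ * arg l < Real.pi := by
    have hp := Real.pi_pos
    constructor
    · rcases le_total 0 (arg l) with h | h
      · nlinarith
      · nlinarith
    · rcases le_total 0 (arg l) with h | h
      · nlinarith
      · nlinarith
  rw [mem_slitPlane_iff_arg]
  refine ⟨?_, exp_ne_zero _⟩
  have : arg (exp ((τ:ℂ) * log l)) = τ * arg l := by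
    rw [← log_im, log_exp (by rw [him]; exact hb.1) (by rw [him]; exact hb.2.le), him]
  rw [this]; exact hb.2.ne

theorem Y_deriv {l : ℂ} (hl : l ∈ slitPlane) {X : ℝ} (hX : 0 ≤ X) {τ : ℝ} (h0 : 0 ≤ τ)
    (h1 : τ ≤ 1) :
    HasDerivAt (fun τ : ℝ => exp (-(5 / 6) * (τ * log l)) * Ef (exp (τ * log l)) X)
      (-(1 / 5) * log l * exp (-(5 / 6) * (τ * log l)) * exp (τ * log l) *
        (X * (qf (exp (τ * log l)) X)⁻¹)) τ := by
  have hs := path_slit hl h0 h1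
  have e0 : HasDerivAt (fun z : ℂ => z * log l) (log l) (τ:ℂ) := by
    simpa using (hasDerivAt_id (τ:ℂ)).mul_const (log l)
  have e1 := e0.cexp
  have e2 := (e0.const_mul (-(5 / 6) : ℂ)).cexp
  have e3 := (E_param hs hX).comp (τ:ℂ) e1
  have := (e2.mul e3).comp_ofReal
  refine this.congr_deriv ?_
  have := exp_ne_zero ((τ:ℂ) * log l)
  simp only [Function.comp]
  field_simp
  ring

theorem norm_X_div_q {l : ℂ} {X : ℝ} (hX : 0 < X) (hl : ‖l‖ ≤ X ^ 3 / 2) :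
    ‖(X:ℂ) * (qf l X)⁻¹‖ ≤ Real.sqrt (2 / X) := by
  apply Real.le_sqrt_of_sq_le
  rw [norm_mul, norm_inv, mul_pow, inv_pow, ← norm_pow, ← norm_pow, q_sq]
  have h1 : X ^ 3 / 2 ≤ ‖Qf l X‖ := by
    have h2 : ‖(X:ℂ) ^ 3‖ = X ^ 3 := by simp [abs_of_pos hX]
    have h3 := norm_sub_norm_le ((X:ℂ) ^ 3) (-l)
    rw [norm_neg, sub_neg_eq_add, h2] at h3
    unfold Qf; linarith
  have h4 : ‖(X:ℂ) ^ 2‖ = X ^ 2 := by simp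
  have h5 : 0 < X ^ 3 / 2 := by positivity
  rw [h4]
  calc X ^ 2 * (‖Qf l X‖)⁻¹ ≤ X ^ 2 * (X ^ 3 / 2)⁻¹ := by gcongr
    _ = _ := by field_simp

theorem E_compare {l : ℂ} (hl : l ∈ slitPlane) :
    Tendsto (fun X => exp (-(5 / 6) * log l) * Ef l X - Ef 1 X) atTop (𝓝 0) := by
  set μ := log l with hμ
  have hl0 := slitPlane_ne_zero hl
  set c := (1 / 5) * ‖μ‖ * Real.exp ((5 / 6) * ‖μ‖) * Real.exp ‖μ‖ with hc
  have hlim : Tendsto (fun X : ℝ => c * Real.sqrt (2 / X)) atTop (𝓝 0) := by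
    have : Tendsto (fun X : ℝ => Real.sqrt (2 / X)) atTop (𝓝 (Real.sqrt 0)) :=
      (Real.continuous_sqrt.tendsto 0).comp (tendsto_const_nhds.div_atTop tendsto_id)
    simpa using this.const_mul c
  refine squeeze_zero_norm' ?_ hlim
  have hev : ∀ᶠ X : ℝ in atTop, Real.exp ‖μ‖ ≤ X ^ 3 / 2 := by
    have : Tendsto (fun X : ℝ => X ^ 3 / 2) atTop atTop :=
      (tendsto_pow_atTop (by norm_num)).atTop_div_const (by norm_num)
    exact this.eventually_ge_atTop _
  filter_upwards [hev, eventually_gt_atTop 0] with X hX hX0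
  have hd := fun τ (h : τ ∈ Icc (0:ℝ) 1) => Y_deriv hl hX0.le h.1 h.2
  have := norm_image_sub_le_of_norm_deriv_le_segment_01' (C := c * Real.sqrt (2 / X))
    (fun τ h => (hd τ h).hasDerivWithinAt) (by
      intro τ h
      rw [← hμ]
      have hn : ‖(τ:ℂ) * μ‖ ≤ ‖μ‖ := by
        rw [norm_mul]
        have : ‖(τ:ℂ)‖ ≤ 1 := by simpa [abs_of_nonneg h.1] using h.2.le
        nlinarith [norm_nonneg μ]
      have e1 : ‖exp (τ * μ)‖ ≤ Real.exp ‖μ‖ :=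
        (norm_exp_le_exp_norm _).trans (Real.exp_le_exp.2 hn)
      have e2 : ‖exp (-(5 / 6) * (τ * μ))‖ ≤ Real.exp ((5 / 6) * ‖μ‖) := by
        refine (norm_exp_le_exp_norm _).trans (Real.exp_le_exp.2 ?_)
        rw [norm_mul, norm_neg]
        have : ‖(5 / 6 : ℂ)‖ = 5 / 6 := by norm_num
        rw [this]; linarith
      have e3 := norm_X_div_q hX0 (e1.trans hX)
      rw [norm_mul, norm_mul, norm_mul, norm_mul, norm_neg]
      have : ‖(1 / 5 : ℂ)‖ = 1 / 5 := by norm_num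
      rw [this, hc]
      gcongr)
  simpa [← hμ, exp_log hl0, show exp μ = l from exp_log hl0] using this

noncomputable def phi (x : ℝ) : ℝ := (Real.sqrt (|x| ^ 3 + 1))⁻¹

theorem phi_cont : Continuous phi := by
  unfold phi
  refine Continuous.inv₀ (by fun_prop) fun x => ?_
  have : 0 < |x| ^ 3 + 1 := by positivity
  exact (Real.sqrt_pos.2 this).ne'

noncomputable def Phi (x : ℝ) : ℝ := ∫ t in (0:ℝ)..x, phi t

theorem Phi_deriv (x : ℝ) : HasDerivAt Phi (phi x) x :=
  intervalIntegral.integral_hasDerivAt_right (phi_cont.intervalIntegrable _ _)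
    phi_cont.stronglyMeasurable.stronglyMeasurableAtFilter phi_cont.continuousAt

theorem Phi_mono : Monotone Phi := by
  apply monotone_of_deriv_nonneg
  · exact fun x => (Phi_deriv x).differentiableAt
  · intro x; rw [(Phi_deriv x).deriv]; unfold phi; positivity

noncomputable def Xt (t : ℝ) : ℝ := (t ^ 4 + 8 * t) / (4 * (1 - t ^ 3))
noncomputable def kt (t : ℝ) : ℝ :=
  2 * (∫ s in (0:ℝ)..t, Real.sqrt (1 - s ^ 3)) - (4 / 5) * (t * Real.sqrt (1 - t ^ 3))

theorem kt_cont : Continuous kt := by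
  unfold kt
  have : Continuous fun t : ℝ => ∫ s in (0:ℝ)..t, Real.sqrt (1 - s ^ 3) :=
    intervalIntegral.continuous_primitive
      (fun a b => (by fun_prop : Continuous fun s : ℝ => Real.sqrt (1 - s ^ 3)).intervalIntegrable _ _) 0
  fun_prop

theorem pow3_lt {t : ℝ} (h0 : 0 ≤ t) (h1 : t < 1) : 0 < 1 - t ^ 3 := by
  have : t ^ 3 < 1 := pow_lt_one₀ h0 h1 (by norm_num)
  linarith

theorem kt_deriv {t : ℝ} (h0 : 0 ≤ t) (h1 : t < 1) :
    HasDerivAt kt ((6 / 5) * (Real.sqrt (1 - t ^ 3))⁻¹) t := by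
  have hp := pow3_lt h0 h1
  have hc : Continuous fun s : ℝ => Real.sqrt (1 - s ^ 3) := by fun_prop
  have d1 : HasDerivAt (fun t : ℝ => ∫ s in (0:ℝ)..t, Real.sqrt (1 - s ^ 3))
      (Real.sqrt (1 - t ^ 3)) t :=
    intervalIntegral.integral_hasDerivAt_right (hc.intervalIntegrable _ _)
      hc.stronglyMeasurable.stronglyMeasurableAtFilter hc.continuousAt
  have d2 : HasDerivAt (fun t : ℝ => Real.sqrt (1 - t ^ 3))
      (-(3 * t ^ 2) / (2 * Real.sqrt (1 - t ^ 3))) t := by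
    have : HasDerivAt (fun t : ℝ => 1 - t ^ 3) (-(3 * t ^ 2)) t := by
      simpa using (hasDerivAt_pow 3 t).const_sub 1
    exact this.sqrt hp.ne'
  have := (d1.const_mul 2).sub (((hasDerivAt_id t).mul d2).const_mul (4 / 5))
  refine this.congr_deriv ?_
  set w := Real.sqrt (1 - t ^ 3) with hw
  have hw0 : 0 < w := Real.sqrt_pos.2 hp
  have hw2 : t ^ 3 = 1 - w ^ 2 := by rw [hw, Real.sq_sqrt hp.le]; ring
  simp only [id]
  field_simp
  ring_nf
  rw [hw2]; ring

theorem Xt_nonneg {t : ℝ} (h0 : 0 ≤ t) (h1 : t < 1) : 0 ≤ Xt t := by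
  have := pow3_lt h0 h1
  unfold Xt; positivity

theorem Xt_deriv {t : ℝ} (h0 : 0 ≤ t) (h1 : t < 1) :
    HasDerivAt Xt ((8 + 20 * t ^ 3 - t ^ 6) / (4 * (1 - t ^ 3) ^ 2)) t := by
  have hp := pow3_lt h0 h1
  have n1 : HasDerivAt (fun t : ℝ => t ^ 4 + 8 * t) (4 * t ^ 3 + 8) t := by
    have := (hasDerivAt_pow 4 t).add ((hasDerivAt_id t).const_mul 8)
    refine HasDerivAt.congr_deriv this ?_
    norm_num
  have n2 : HasDerivAt (fun t : ℝ => 4 * (1 - t ^ 3)) (4 * (-(3 * t ^ 2))) t := by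
    have : HasDerivAt (fun t : ℝ => 1 - t ^ 3) (-(3 * t ^ 2)) t := by
      simpa using (hasDerivAt_pow 3 t).const_sub 1
    exact this.const_mul 4
  refine (n1.div n2 (by positivity)).congr_deriv ?_
  have := hp.ne'
  field_simp
  ring

theorem phi_Xt {t : ℝ} (h0 : 0 ≤ t) (h1 : t < 1) :
    phi (Xt t) = 8 * Real.sqrt (1 - t ^ 3) ^ 3 / (8 + 20 * t ^ 3 - t ^ 6) := by
  have hp := pow3_lt h0 h1
  have hn : 0 < 8 + 20 * t ^ 3 - t ^ 6 := by
    have : 0 ≤ t ^ 3 := by positivity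
    nlinarith
  set w := Real.sqrt (1 - t ^ 3) with hw
  have hw0 : 0 < w := Real.sqrt_pos.2 hp
  have hw2 : w ^ 2 = 1 - t ^ 3 := by rw [hw, Real.sq_sqrt hp.le]
  unfold phi
  rw [abs_of_nonneg (Xt_nonneg h0 h1)]
  have : Xt t ^ 3 + 1 = ((8 + 20 * t ^ 3 - t ^ 6) / (8 * w ^ 3)) ^ 2 := by
    have e : (8 * w ^ 3) ^ 2 = 64 * (1 - t ^ 3) ^ 3 := by rw [← hw2]; ring
    rw [div_pow, e]
    unfold Xt
    have := hp.ne'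
    field_simp
    ring
  rw [this, Real.sqrt_sq (by positivity), inv_div]

theorem Phi_Xt {t : ℝ} (h0 : 0 ≤ t) (h1 : t < 1) : (3 / 5) * Phi (Xt t) = kt t := by
  have hd : ∀ s, 0 ≤ s → s < 1 → HasDerivAt (fun s => (3 / 5) * Phi (Xt s) - kt s) 0 s := by
    intro s hs0 hs1
    have hp := pow3_lt hs0 hs1
    have a1 := ((Phi_deriv (Xt s)).comp s (Xt_deriv hs0 hs1)).const_mul (3 / 5)
    refine (a1.sub (kt_deriv hs0 hs1)).congr_deriv ?_
    rw [phi_Xt hs0 hs1]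
    have hn : 0 < 8 + 20 * s ^ 3 - s ^ 6 := by
      have : 0 ≤ s ^ 3 := by positivity
      nlinarith
    set w := Real.sqrt (1 - s ^ 3) with hw
    have hw0 : 0 < w := Real.sqrt_pos.2 hp
    have hw2 : 1 - s ^ 3 = w ^ 2 := by rw [hw, Real.sq_sqrt hp.le]
    rw [hw2]
    have := hn.ne'
    field_simp
    ring
  have := constant_of_has_deriv_right_zero (a := 0) (b := t)
    (fun s hs => (hd s hs.1 (hs.2.trans_lt h1)).continuousAt.continuousWithinAt)
    (fun s hs => (hd s hs.1 (hs.2.trans h1)).hasDerivWithinAt) t ⟨h0, le_rfl⟩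
  simp [Xt, Phi, kt] at this ⊢
  linarith

theorem Xt_tendsto : Tendsto Xt (𝓝[<] 1) atTop := by
  unfold Xt
  have h1 : Tendsto (fun t : ℝ => t ^ 4 + 8 * t) (𝓝[<] 1) (𝓝 9) := by
    have : Continuous fun t : ℝ => t ^ 4 + 8 * t := by fun_prop
    have := (this.tendsto 1).mono_left (nhdsWithin_le_nhds (s := Iio 1))
    norm_num at this; exact this
  have h2 : Tendsto (fun t : ℝ => (4 * (1 - t ^ 3))) (𝓝[<] 1) (𝓝[>] 0) := by
    rw [tendsto_nhdsWithin_iff]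
    constructor
    · have : Continuous fun t : ℝ => 4 * (1 - t ^ 3) := by fun_prop
      have := (this.tendsto 1).mono_left (nhdsWithin_le_nhds (s := Iio 1))
      norm_num at this; exact this
    · have : ∀ᶠ t : ℝ in 𝓝[<] 1, 0 < t := nhdsWithin_le_nhds (lt_mem_nhds one_pos)
      filter_upwards [this, self_mem_nhdsWithin] with t ht ht1
      have := pow3_lt ht.le ht1
      simp only [mem_Ioi]; linarith
  simp only [div_eq_mul_inv]
  exact h1.pos_mul_atTop (by norm_num) (tendsto_inv_nhdsGT_zero.comp h2)

theorem Phi_lim : Tendsto (fun x => (3 / 5) * Phi x) atTop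
    (𝓝 (2 * ∫ t in (0:ℝ)..1, Real.sqrt (1 - t ^ 3))) := by
  have hk : Tendsto kt (𝓝[<] 1) (𝓝 (2 * ∫ t in (0:ℝ)..1, Real.sqrt (1 - t ^ 3))) := by
    have := (kt_cont.tendsto 1).mono_left (nhdsWithin_le_nhds (s := Iio 1))
    simpa [kt] using this
  have hk2 : Tendsto (fun t => (3 / 5) * Phi (Xt t)) (𝓝[<] 1)
      (𝓝 (2 * ∫ t in (0:ℝ)..1, Real.sqrt (1 - t ^ 3))) := by
    refine hk.congr' ?_
    have : ∀ᶠ t : ℝ in 𝓝[<] 1, 0 < t := nhdsWithin_le_nhds (lt_mem_nhds one_pos)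
    filter_upwards [this, self_mem_nhdsWithin] with t ht ht1
    exact (Phi_Xt ht.le ht1).symm
  have hm : Monotone (fun x => (3 / 5) * Phi x) := fun x y h => by
    have := Phi_mono h
    linarith
  rcases tendsto_atTop_of_monotone hm with h | ⟨L, h⟩
  · exact absurd hk2 (not_tendsto_nhds_of_tendsto_atTop (h.comp Xt_tendsto) _)
  · have := tendsto_nhds_unique (h.comp Xt_tendsto) hk2
    rwa [← this]

theorem E_one {X : ℝ} (hX : 0 ≤ X) : Ef 1 X = (((3 / 5) * Phi X : ℝ) : ℂ) := by
  rw [E_eq one_mem_slitPlane hX]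
  have : ∫ t in (0:ℝ)..X, (qf 1 t)⁻¹ = ∫ t in (0:ℝ)..X, ((phi t : ℝ) : ℂ) := by
    apply intervalIntegral.integral_congr
    intro t ht
    rw [uIcc_of_le hX] at ht
    have h0 : 0 ≤ t ^ 3 + 1 := by have := ht.1; positivity
    have : qf 1 t = ((Real.sqrt (t ^ 3 + 1) : ℝ) : ℂ) := by
      rw [Real.sqrt_eq_rpow, ofReal_cpow h0]
      simp [qf, Qf]
    simp only [this, phi, abs_of_nonneg ht.1, ofReal_inv]
  rw [this, intervalIntegral.integral_ofReal]
  simp [Phi]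

theorem E_lim {l : ℂ} (hl : l ∈ slitPlane) {K : ℝ}
    (hK : K = 2 * ∫ t in (0:ℝ)..1, Real.sqrt (1 - t ^ 3)) :
    Tendsto (Ef l) atTop (𝓝 (K * l ^ ((5 : ℂ) / 6))) := by
  have h1 : Tendsto (Ef 1) atTop (𝓝 (K : ℂ)) := by
    have := (continuous_ofReal.tendsto K).comp (hK ▸ Phi_lim)
    refine this.congr' ?_
    filter_upwards [eventually_ge_atTop 0] with X hX
    exact (E_one hX).symm
  have h2 := ((E_compare hl).add h1).mul_const (exp ((5 / 6) * log l))
  have h3 : l ^ ((5 : ℂ) / 6) = exp ((5 / 6) * log l) := by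
    rw [cpow_def_of_ne_zero (slitPlane_ne_zero hl), mul_comm]
  rw [zero_add, ← h3] at h2
  refine h2.congr fun X => ?_
  rw [h3, sub_add_cancel, mul_right_comm, ← exp_add]
  simp

theorem cpow_five_half {x : ℝ} (hx : 0 ≤ x) :
    (x : ℂ) ^ ((5 : ℂ) / 2) = ((Real.sqrt x ^ 5 : ℝ) : ℂ) := by
  have : Real.sqrt x ^ 5 = x ^ ((5:ℝ) / 2) := by
    rw [Real.sqrt_eq_rpow, ← Real.rpow_natCast, ← Real.rpow_mul hx]; norm_num
  rw [this, ofReal_cpow hx]; simp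

theorem S_lim {l : ℂ} (hl : l ∈ slitPlane) {K : ℝ}
    (hK : K = 2 * ∫ t in (0:ℝ)..1, Real.sqrt (1 - t ^ 3)) :
    Tendsto (fun x : ℝ => Sf l x - (2 / 5) * (x : ℂ) ^ ((5 : ℂ) / 2)) atTop
      (𝓝 (K * l ^ ((5 : ℂ) / 6))) := by
  have h1 : Tendsto (fun x : ℝ => (x:ℂ) * qf l x - (x : ℂ) ^ ((5 : ℂ) / 2)) atTop (𝓝 0) := by
    have hlim : Tendsto (fun x : ℝ => ‖l‖ / Real.sqrt x) atTop (𝓝 0) :=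
      tendsto_const_nhds.div_atTop Real.tendsto_sqrt_atTop
    refine squeeze_zero_norm' ?_ hlim
    filter_upwards [eventually_gt_atTop 0] with x hx
    rw [cpow_five_half hx.le]
    set y := Real.sqrt x with hy
    have hy0 : 0 < y := Real.sqrt_pos.2 hx
    have hxy : x = y ^ 2 := (Real.sq_sqrt hx.le).symm
    have e1 : (qf l x - (y:ℂ) ^ 3) * (qf l x + (y:ℂ) ^ 3) = l := by
      have : (qf l x - (y:ℂ) ^ 3) * (qf l x + (y:ℂ) ^ 3) = qf l x ^ 2 - (y:ℂ) ^ 6 := by ring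
      rw [this, q_sq]; unfold Qf; rw [hxy]; push_cast; ring
    have e2 : y ^ 3 ≤ ‖qf l x + (y:ℂ) ^ 3‖ := by
      refine le_trans ?_ (re_le_norm _)
      have := q_re l x
      have h3 : ((y:ℂ) ^ 3).re = y ^ 3 := by rw [← ofReal_pow, ofReal_re]
      rw [add_re, h3]; linarith
    have e3 : (x:ℂ) * qf l x - ((y ^ 5 : ℝ) : ℂ) = (y:ℂ) ^ 2 * (qf l x - (y:ℂ) ^ 3) := by
      have : (x:ℂ) = (y:ℂ) ^ 2 := by rw [hxy]; push_cast; rfl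
      rw [this]; push_cast; ring
    rw [e3, norm_mul, le_div_iff₀ hy0]
    have e4 : ‖(y:ℂ) ^ 2‖ = y ^ 2 := by simp
    rw [e4]
    have e5 := congrArg norm e1
    rw [norm_mul] at e5
    have := norm_nonneg (qf l x - (y:ℂ) ^ 3)
    calc _ = ‖qf l x - (y:ℂ) ^ 3‖ * y ^ 3 := by ring
      _ ≤ ‖qf l x - (y:ℂ) ^ 3‖ * ‖qf l x + (y:ℂ) ^ 3‖ := by gcongr
      _ = ‖l‖ := e5
  have := (E_lim hl hK).add (h1.const_mul (2 / 5))
  rw [mul_zero, add_zero] at this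
  refine this.congr fun x => ?_
  unfold Ef; ring

theorem S_re_tendsto {l : ℂ} (hl : l ∈ slitPlane) :
    Tendsto (fun x => (Sf l x).re) atTop atTop := by
  have h1 := (continuous_re.tendsto _).comp (S_lim hl rfl)
  have h2 : Tendsto (fun x : ℝ => (2 / 5) * Real.sqrt x ^ 5) atTop atTop :=
    ((tendsto_pow_atTop (by norm_num)).comp Real.tendsto_sqrt_atTop).const_mul_atTop (by norm_num)
  refine (h1.add_atTop h2).congr' ?_
  filter_upwards [eventually_ge_atTop 0] with x hx
  simp only [Function.comp]
  rw [cpow_five_half hx]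
  have : (2 / 5 : ℂ) * ((Real.sqrt x ^ 5 : ℝ) : ℂ) = (((2 / 5) * Real.sqrt x ^ 5 : ℝ) : ℂ) := by
    push_cast; ring
  rw [this, sub_re, ofReal_re]; ring

noncomputable def rf (l : ℂ) (x : ℝ) : ℂ := (Qf l x) ^ (-(1 : ℂ) / 4)

theorem rf_mul_qf {l : ℂ} (hl : l ∈ slitPlane) {x : ℝ} (hx : 0 ≤ x) :
    rf l x * qf l x = (Qf l x) ^ ((1 : ℂ) / 4) := by
  unfold rf qf
  rw [← cpow_add _ _ (Q_ne hl hx)]; norm_num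

theorem r_deriv {l : ℂ} (hl : l ∈ slitPlane) {x : ℝ} (hx : 0 ≤ x) :
    HasDerivAt (rf l) (-(3 / 4) * (x : ℂ) ^ 2 * rf l x / qf l x ^ 2) x := by
  have := Qpow_deriv hl hx (-(1 : ℂ) / 4)
  refine HasDerivAt.congr_deriv this ?_
  change _ * (rf l x / Qf l x) = _
  rw [q_sq]
  ring

/-- derivative of the Wronskian-type quantity; `e = ∓1`. -/
theorem wr_deriv {l : ℂ} (hl : l ∈ slitPlane) {x : ℝ} (hx : 0 ≤ x) {g g1 : ℝ → ℂ}
    (hg : HasDerivAt g (g1 x) x) (hg1 : HasDerivAt g1 (Qf l x * g x) x) (e : ℂ) (he : e ^ 2 = 1) :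
    HasDerivAt (fun t : ℝ => rf l t * exp (e * Sf l t) *
        (g1 t - (-(3 / 4) * (t:ℂ) ^ 2 / Qf l t + e * qf l t) * g t))
      ((3 / 2 * x / qf l x ^ 2 - 45 / 16 * x ^ 4 / qf l x ^ 4) *
        (rf l x * exp (e * Sf l x) * g x)) x := by
  have hx2 : HasDerivAt (fun t : ℝ => -(3 / 4) * (t:ℂ) ^ 2) (-(3 / 4) * (2 * (x:ℂ))) x := by
    simpa using ((hasDerivAt_pow 2 (x:ℂ)).const_mul (-(3 / 4) : ℂ)).comp_ofReal
  have hα := (hx2.div (Q_deriv l x) (Q_ne hl hx)).add ((q_deriv hl hx).const_mul e)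
  have := ((r_deriv hl hx).mul ((S_deriv hl hx).const_mul e).cexp).mul (hg1.sub (hα.mul hg))
  refine this.congr_deriv ?_
  have hq := q_ne hl hx
  simp only [Pi.mul_apply, Pi.add_apply, Pi.div_apply, Pi.sub_apply]
  rw [← q_sq]
  set q := qf l x
  set r := rf l x
  set E := exp (e * Sf l x)
  field_simp
  have h4 : e ^ 2 = 1 := he
  ring_nf
  rw [he]
  ring

theorem B_deriv {κ σ : ℝ} (hσ : 0 < σ) {x : ℝ} (hx : 0 ≤ x) :
    HasDerivAt (fun x : ℝ => κ * (x + σ) ^ (-(5 / 2) : ℝ))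
      (-(κ * (5 / 2) * (x + σ) ^ (-(7 / 2) : ℝ))) x := by
  have hs : x + σ ≠ 0 := by positivity
  have := (((hasDerivAt_id x).add_const σ).rpow_const (p := -(5 / 2)) (Or.inl hs)).const_mul κ
  refine this.congr_deriv ?_
  have : (-(5 / 2) : ℝ) - 1 = -(7 / 2) := by norm_num
  rw [this]; simp only [id]; ring

theorem p_bound {l : ℂ} {d σ x : ℝ} (hd : 0 < d) (hd1 : d ≤ 1) (hσ : 0 < σ) (hx : 0 ≤ x)
    (hq : d * Real.sqrt (x + σ) ^ 3 ≤ ‖qf l x‖) :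
    ‖(3 / 2 * x / qf l x ^ 2 - 45 / 16 * x ^ 4 / qf l x ^ 4) / qf l x‖ ≤
      (2 / d ^ 5) * (5 / 2) * (x + σ) ^ (-(7 / 2) : ℝ) := by
  have hs : 0 < x + σ := by positivity
  have hy7 : (x + σ) ^ (-(7 / 2) : ℝ) = (Real.sqrt (x + σ) ^ 7)⁻¹ := by
    rw [Real.rpow_neg hs.le, Real.sqrt_eq_rpow, ← Real.rpow_natCast, ← Real.rpow_mul hs.le]
    norm_num
  rw [hy7]
  have hxy : x ≤ Real.sqrt (x + σ) ^ 2 := by rw [Real.sq_sqrt hs.le]; linarith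
  have hy : 0 < Real.sqrt (x + σ) := Real.sqrt_pos.2 hs
  set y := Real.sqrt (x + σ)
  have hn : 0 < d * y ^ 3 := by positivity
  have e1 : (3 / 2 * (x:ℂ) / qf l x ^ 2 - 45 / 16 * x ^ 4 / qf l x ^ 4) / qf l x
      = 3 / 2 * x / qf l x ^ 3 - 45 / 16 * x ^ 4 / qf l x ^ 5 := by
    have : qf l x ≠ 0 := norm_pos_iff.1 (hn.trans_le hq)
    field_simp
  have e2 : ‖3 / 2 * (x:ℂ) / qf l x ^ 3‖ = 3 / 2 * x / ‖qf l x‖ ^ 3 := by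
    simp [abs_of_nonneg hx]
  have e3 : ‖45 / 16 * (x:ℂ) ^ 4 / qf l x ^ 5‖ = 45 / 16 * x ^ 4 / ‖qf l x‖ ^ 5 := by
    simp [abs_of_nonneg hx]
  rw [e1]
  refine (norm_sub_le _ _).trans ?_
  rw [e2, e3]
  have b1 : 3 / 2 * x / ‖qf l x‖ ^ 3 ≤ 3 / 2 * y ^ 2 / (d * y ^ 3) ^ 3 := by gcongr
  have b2 : 45 / 16 * x ^ 4 / ‖qf l x‖ ^ 5 ≤ 45 / 16 * (y ^ 2) ^ 4 / (d * y ^ 3) ^ 5 := by gcongr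
  have b3 : 3 / 2 * y ^ 2 / (d * y ^ 3) ^ 3 = 3 / 2 * d ^ 2 * ((d ^ 5)⁻¹ * (y ^ 7)⁻¹) := by
    field_simp
  have b4 : 45 / 16 * (y ^ 2) ^ 4 / (d * y ^ 3) ^ 5 = 45 / 16 * ((d ^ 5)⁻¹ * (y ^ 7)⁻¹) := by
    field_simp
  have b5 : 2 / d ^ 5 * (5 / 2) * (y ^ 7)⁻¹ = 5 * ((d ^ 5)⁻¹ * (y ^ 7)⁻¹) := by
    field_simp
  have hpos : 0 < (d ^ 5)⁻¹ * (y ^ 7)⁻¹ := by positivity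
  have hd2 : d ^ 2 ≤ 1 := by nlinarith
  rw [b5]; nlinarith

theorem u_lim {f : ℂ → ℂ → ℂ} (hf : IsStdSolutionFamily f) {l : ℂ} (hl : l ∈ slitPlane) {K : ℝ}
    (hK : K = 2 * ∫ t in (0:ℝ)..1, Real.sqrt (1 - t ^ 3)) :
    Tendsto (fun x : ℝ => rf l x * qf l x * exp (Sf l x) * f x l) atTop
      (𝓝 (exp (K * l ^ ((5 : ℂ) / 6)))) := by
  have h1 : Tendsto (fun x : ℝ => f x l * (x:ℂ) ^ ((3 : ℂ) / 4) *
          exp ((2 / 5 : ℂ) * (x:ℂ) ^ ((5 : ℂ) / 2))) atTop (𝓝 1) := by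
    obtain ⟨C, hC, R, hR, h⟩ := hf.2 (Real.pi / 10) (by positivity) {l} isCompact_singleton
    rw [tendsto_iff_norm_sub_tendsto_zero]
    have hlim : Tendsto (fun x : ℝ => C * x ^ (-(1 / 2) : ℝ)) atTop (𝓝 0) := by
      simpa using (tendsto_rpow_neg_atTop (y := 1 / 2) (by norm_num)).const_mul C
    refine squeeze_zero' (Eventually.of_forall fun _ => norm_nonneg _) ?_ hlim
    filter_upwards [eventually_ge_atTop R, eventually_gt_atTop 0] with x hx hx0
    have hn : ‖(x:ℂ)‖ = x := by simp [abs_of_pos hx0]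
    have := h l rfl x (by rw [hn]; exact hx) (by
      rw [arg_ofReal_of_nonneg hx0.le, abs_zero]; have := Real.pi_pos; linarith)
    rwa [hn] at this
  have h2 : Tendsto (fun x : ℝ => (1 + l / (x:ℂ) ^ 3) ^ ((1 : ℂ) / 4)) atTop (𝓝 1) := by
    have a1 : Tendsto (fun x : ℝ => 1 + l / (x:ℂ) ^ 3) atTop (𝓝 1) := by
      have : Tendsto (fun x : ℝ => l / (x:ℂ) ^ 3) atTop (𝓝 0) := by
        rw [tendsto_zero_iff_norm_tendsto_zero]
        have : Tendsto (fun x : ℝ => ‖l‖ / |x| ^ 3) atTop (𝓝 0) :=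
          tendsto_const_nhds.div_atTop
            ((tendsto_pow_atTop (by norm_num)).comp tendsto_abs_atTop_atTop)
        simpa using this
      simpa using this.const_add 1
    have a2 : ContinuousAt (fun z : ℂ => z ^ ((1 : ℂ) / 4)) 1 :=
      continuousAt_cpow_const one_mem_slitPlane
    have := a2.tendsto.comp a1
    rw [one_cpow] at this
    exact this
  have h3 := (continuous_exp.tendsto _).comp (S_lim hl hK)
  have h4 := (h1.mul h2).mul h3
  rw [one_mul, one_mul] at h4
  refine h4.congr' ?_
  filter_upwards [eventually_gt_atTop 0] with x hx
  have hx0 : (x:ℂ) ≠ 0 := by exact_mod_cast hx.ne'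
  rw [rf_mul_qf hl hx.le]
  have e1 : Qf l x = ((x ^ 3 : ℝ) : ℂ) * (1 + l / (x:ℂ) ^ 3) := by
    unfold Qf; push_cast; field_simp
  have hne : 1 + l / (x:ℂ) ^ 3 ≠ 0 := by
    intro h0
    rw [h0, mul_zero] at e1
    exact Q_ne hl hx.le e1
  have e2 : Qf l x ^ ((1 : ℂ) / 4) = (x:ℂ) ^ ((3 : ℂ) / 4) * (1 + l / (x:ℂ) ^ 3) ^ ((1 : ℂ) / 4) := by
    rw [cpow_def_of_ne_zero (Q_ne hl hx.le), cpow_def_of_ne_zero hx0, cpow_def_of_ne_zero hne,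
      ← exp_add, e1, log_ofReal_mul (by positivity) hne, Real.log_pow, ← ofReal_log hx.le]
    congr 1; push_cast; ring
  rw [e2]
  simp only [Function.comp]
  have e3 : exp (Sf l x) = exp ((2 / 5 : ℂ) * (x:ℂ) ^ ((5 : ℂ) / 2)) *
      exp (Sf l x - (2 / 5) * (x : ℂ) ^ ((5 : ℂ) / 2)) := by
    rw [← exp_add]; congr 1; ring
  rw [e3]; ring

theorem wkb {f : ℂ → ℂ → ℂ} (hf : IsStdSolutionFamily f) {l : ℂ} (hl : l ∈ slitPlane) {K : ℝ}
    (hK : K = 2 * ∫ t in (0:ℝ)..1, Real.sqrt (1 - t ^ 3)) {d σ : ℝ} (hd : 0 < d) (hd1 : d ≤ 1)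
    (hσ : 0 < σ) (hq : ∀ x, 0 ≤ x → d * Real.sqrt (x + σ) ^ 3 ≤ ‖qf l x‖)
    (hB : (2 / d ^ 5) * σ ^ (-(5 / 2) : ℝ) ≤ 1 / 2) :
    ‖f 0 l * l ^ ((1 : ℂ) / 4) * exp (-(K : ℂ) * l ^ ((5 : ℂ) / 6)) - 1‖ ≤
      2 * ((2 / d ^ 5) * σ ^ (-(5 / 2) : ℝ)) := by
  obtain ⟨hdiff, hode⟩ := hf.1 l
  have hg : ∀ x : ℝ, HasDerivAt (fun t : ℝ => f t l) (deriv (fun w => f w l) x) x := fun x =>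
    (hdiff (x:ℂ)).hasDerivAt.comp_ofReal
  have hg1 : ∀ x : ℝ, HasDerivAt (fun t : ℝ => deriv (fun w => f w l) (t:ℂ))
      (Qf l x * f x l) x := fun x => by
    have h1 : DifferentiableAt ℂ (deriv (fun w => f w l)) (x:ℂ) :=
      (hdiff.analyticAt (x:ℂ)).deriv.differentiableAt
    have h2 := h1.hasDerivAt
    rw [hode] at h2
    exact h2.comp_ofReal
  have main := core (u := fun x : ℝ => rf l x * qf l x * exp (Sf l x) * f x l)
    (a := fun t : ℝ => rf l t * exp (-1 * Sf l t) *
        (deriv (fun w => f w l) (t:ℂ) - (-(3 / 4) * (t:ℂ) ^ 2 / Qf l t + -1 * qf l t) * f t l))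
    (b := fun t : ℝ => rf l t * exp (1 * Sf l t) *
        (deriv (fun w => f w l) (t:ℂ) - (-(3 / 4) * (t:ℂ) ^ 2 / Qf l t + 1 * qf l t) * f t l))
    (S := Sf l)
    (p := fun x => (3 / 2 * x / qf l x ^ 2 - 45 / 16 * x ^ 4 / qf l x ^ 4) / qf l x)
    (B := fun x : ℝ => (2 / d ^ 5) * (x + σ) ^ (-(5 / 2) : ℝ))
    (B' := fun x : ℝ => (2 / d ^ 5) * (5 / 2) * (x + σ) ^ (-(7 / 2) : ℝ))
    (U := exp (K * l ^ ((5 : ℂ) / 6)))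
    (by
      intro x hx
      have : exp (2 * Sf l x) = exp (Sf l x) * exp (Sf l x) := by rw [← exp_add]; congr 1; ring
      simp only [neg_mul, one_mul]
      rw [this, exp_neg]
      have := exp_ne_zero (Sf l x)
      field_simp
      ring)
    (by
      intro x hx
      refine (wr_deriv hl hx (hg x) (hg1 x) (-1) (by norm_num)).congr_deriv ?_
      have : exp (-(2 * Sf l x)) = exp (-1 * Sf l x) * exp (-Sf l x) := by
        rw [← exp_add]; congr 1; ring
      rw [this, exp_neg (Sf l x)]
      have := exp_ne_zero (Sf l x)
      have hq0 := q_ne hl hx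
      field_simp)
    (by
      intro x hx
      refine (wr_deriv hl hx (hg x) (hg1 x) 1 (by norm_num)).congr_deriv ?_
      have hq0 := q_ne hl hx
      rw [one_mul]
      field_simp)
    (fun x hx => p_bound hd hd1 hσ hx (hq x hx))
    (fun x hx => B_deriv hσ hx)
    (fun x hx => by positivity)
    (by
      have h1 : Tendsto (fun x : ℝ => x + σ) atTop atTop := tendsto_atTop_add_const_right _ _ tendsto_id
      have := ((tendsto_rpow_neg_atTop (y := 5 / 2) (by norm_num)).comp h1).const_mul (2 / d ^ 5)
      simpa using this)
    (by simpa using hB)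
    (S_mono hl) (S_re_tendsto hl)
    (fun x hx => ((((r_deriv hl hx).mul (q_deriv hl hx)).mul (S_deriv hl hx).cexp).mul
      (hg x)).continuousAt.continuousWithinAt)
    (u_lim hf hl hK)
  simp only [rf_mul_qf hl le_rfl, S_zero, zero_add] at main
  have e0 : Qf l 0 = l := by simp [Qf]
  rw [e0, exp_zero, mul_one, ofReal_zero] at main
  set A := (K : ℂ) * l ^ ((5 : ℂ) / 6)
  have e1 : f 0 l * l ^ ((1 : ℂ) / 4) * exp (-(K : ℂ) * l ^ ((5 : ℂ) / 6)) - 1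
      = (l ^ ((1 : ℂ) / 4) * f 0 l - exp A) * (exp A)⁻¹ := by
    have : -(K : ℂ) * l ^ ((5 : ℂ) / 6) = -A := by simp [A]
    rw [this, exp_neg]
    have := exp_ne_zero A
    field_simp
  rw [e1, norm_mul, norm_inv, ← div_eq_mul_inv, div_le_iff₀ (norm_pos_iff.2 (exp_ne_zero A))]
  exact main

theorem Q_lower {l : ℂ} {m x : ℝ} (hm : -m ≤ Real.cos (arg l)) (hm1 : -1 ≤ m) (hm2 : m < 1)
    (hx : 0 ≤ x) : Real.sqrt ((1 - m) / 2) * (x ^ 3 + ‖l‖) ≤ ‖Qf l x‖ := by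
  have hr : 0 ≤ x ^ 3 := by positivity
  set r := x ^ 3
  apply le_of_sq_le_sq _ (norm_nonneg _)
  rw [mul_pow, Real.sq_sqrt (by linarith)]
  have hre : l.re = ‖l‖ * Real.cos (arg l) := (norm_mul_cos_arg l).symm
  have h1 : ‖Qf l x‖ ^ 2 = r ^ 2 + 2 * r * l.re + ‖l‖ ^ 2 := by
    have hQ : Qf l x = (r : ℂ) + l := by simp [Qf, r]
    rw [hQ, ← normSq_eq_norm_sq, ← normSq_eq_norm_sq, normSq_apply, normSq_apply]
    simp only [add_re, add_im, ofReal_re, ofReal_im]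
    ring
  rw [h1, hre]
  have h2 : 0 ≤ r * ‖l‖ := by positivity
  have h3 : -m * (r * ‖l‖) ≤ Real.cos (arg l) * (r * ‖l‖) := by gcongr
  have h4 : 0 ≤ (1 + m) / 2 * (r - ‖l‖) ^ 2 := mul_nonneg (by linarith) (sq_nonneg _)
  nlinarith

/-- Asymptotics of `f(0,λ)`: with `K = 2∫₀¹ √(1-t³) dt`,
`f(0,λ) = λ^{-1/4} e^{K λ^{5/6}} (1 + O(λ^{-5/6}))` in `|arg λ| ≤ π - δ`. -/
theorem std_solution_asymptotics_at_zero (f : ℂ → ℂ → ℂ) (hf : IsStdSolutionFamily f)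
    (K : ℝ) (hK : K = 2 * ∫ t in (0:ℝ)..1, Real.sqrt (1 - t ^ 3)) :
    ∀ δ > (0 : ℝ), ∃ C > (0 : ℝ), ∃ R > (0 : ℝ), ∀ lam : ℂ,
      R ≤ ‖lam‖ → |Complex.arg lam| ≤ Real.pi - δ →
      ‖f 0 lam * lam ^ ((1 : ℂ) / 4) *
          Complex.exp (-(K : ℂ) * lam ^ ((5 : ℂ) / 6)) - 1‖
        ≤ C * ‖lam‖ ^ (-(5 / 6) : ℝ) := by
  intro δ hδ
  by_cases hδπ : Real.pi < δ
  · refine ⟨1, one_pos, 1, one_pos, fun l _ h => ?_⟩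
    have := abs_nonneg (arg l)
    linarith
  push Not at hδπ
  set m := Real.cos δ with hmdef
  have hm1 : -1 ≤ m := Real.neg_one_le_cos δ
  have hm2 : m < 1 := by
    have := Real.cos_lt_cos_of_nonneg_of_le_pi le_rfl hδπ hδ
    simpa using this
  set c := Real.sqrt ((1 - m) / 2) with hc
  have hc0 : 0 < c := Real.sqrt_pos.2 (by linarith)
  have hc1 : c ≤ 1 := by rw [hc]; exact Real.sqrt_le_iff.2 ⟨by norm_num, by linarith⟩
  set d := Real.sqrt (c / 4) with hddef
  have hd : 0 < d := Real.sqrt_pos.2 (by linarith)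
  have hd1 : d ≤ 1 := by rw [hddef]; exact Real.sqrt_le_iff.2 ⟨by norm_num, by linarith⟩
  have hd2 : d ^ 2 = c / 4 := Real.sq_sqrt (by linarith)
  set κ := 2 / d ^ 5 with hκ
  have hκ0 : 0 < κ := by positivity
  have hlim : Tendsto (fun x : ℝ => κ * x ^ (-(5 / 6) : ℝ)) atTop (𝓝 0) := by
    simpa using (tendsto_rpow_neg_atTop (y := 5 / 6) (by norm_num)).const_mul κ
  obtain ⟨R0, hR0⟩ := eventually_atTop.1
    (hlim.eventually_le_const (show (0:ℝ) < 1 / 2 by norm_num))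
  refine ⟨2 * κ, by positivity, max R0 1, lt_of_lt_of_le one_pos (le_max_right _ _),
    fun l hlR hla => ?_⟩
  have hρ : 0 < ‖l‖ := one_pos.trans_le ((le_max_right _ _).trans hlR)
  have hl : l ∈ slitPlane := by
    rw [mem_slitPlane_iff_arg]
    refine ⟨fun h => ?_, norm_pos_iff.1 hρ⟩
    rw [h, abs_of_pos Real.pi_pos] at hla
    linarith
  have hcos : -m ≤ Real.cos (arg l) := by
    rw [hmdef, ← Real.cos_pi_sub, ← Real.cos_abs (arg l)]
    exact Real.cos_le_cos_of_nonneg_of_le_pi (abs_nonneg _) (by linarith) hla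
  set σ := ‖l‖ ^ (1 / 3 : ℝ) with hσdef
  have hσ : 0 < σ := by positivity
  have hσ3 : σ ^ 3 = ‖l‖ := by
    rw [hσdef, ← Real.rpow_natCast, ← Real.rpow_mul hρ.le]; norm_num
  have hσ5 : σ ^ (-(5 / 2) : ℝ) = ‖l‖ ^ (-(5 / 6) : ℝ) := by
    rw [hσdef, ← Real.rpow_mul hρ.le]; norm_num
  have := wkb hf hl hK hd hd1 hσ (by
    intro x hx
    apply le_of_sq_le_sq _ (norm_nonneg _)
    rw [← norm_pow, q_sq]
    refine le_trans ?_ (Q_lower hcos hm1 hm2 hx)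
    rw [mul_pow, hd2, ← hσ3]
    have hs : 0 ≤ x + σ := by positivity
    have : (Real.sqrt (x + σ) ^ 3) ^ 2 = (x + σ) ^ 3 := by
      rw [← pow_mul, mul_comm, pow_mul, Real.sq_sqrt hs]
    rw [this]
    have h4 : (x + σ) ^ 3 ≤ 4 * (x ^ 3 + σ ^ 3) := by
      nlinarith [mul_nonneg hs (sq_nonneg (x - σ))]
    nlinarith) (by rw [hσ5]; exact hR0 _ ((le_max_left _ _).trans hlR))
  rw [hσ5] at this
  rw [mul_assoc 2 κ]
  exact this
end

section
/- Let f be a standard solution family and let K = 2·∫₀¹ √(1 − t³) dt. Then for every K̃ > K there exists C > 0 such that |f(0,λ)| ≤ C·e^{K̃·|λ|^{5/6}} for all λ ∈ ℂ. -/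
open Complex

lemma ssb_real_beta {a b : ℝ} (ha : 0 < a) (hb : 0 < b) :
    MeasureTheory.IntegrableOn (fun x : ℝ => x ^ (a - 1) * (1 - x) ^ (b - 1)) (Set.Ioo 0 1) ∧
    ∫ x in Set.Ioo (0:ℝ) 1, x ^ (a - 1) * (1 - x) ^ (b - 1)
      = Real.Gamma a * Real.Gamma b / Real.Gamma (a + b) := by
  have hc := Complex.betaIntegral_convergent (u := (a:ℂ)) (v := (b:ℂ)) (by simpa) (by simpa)
  rw [intervalIntegrable_iff_integrableOn_Ioo_of_le zero_le_one] at hc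
  have heq : Set.EqOn (fun x : ℝ => (x:ℂ) ^ ((a:ℂ) - 1) * (1 - (x:ℂ)) ^ ((b:ℂ) - 1))
      (fun x : ℝ => (((x ^ (a - 1) * (1 - x) ^ (b - 1) : ℝ)) : ℂ)) (Set.Ioo 0 1) := by
    intro x hx
    have h1 : (0:ℝ) ≤ 1 - x := by linarith [hx.2]
    simp only [Complex.ofReal_mul]
    rw [Complex.ofReal_cpow hx.1.le, Complex.ofReal_cpow h1]
    push_cast
    rfl
  have hc2 := (MeasureTheory.integrableOn_congr_fun heq measurableSet_Ioo).1 hc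
  constructor
  · have := hc2.re
    rw [MeasureTheory.IntegrableOn]
    simpa using this
  · have h2 := ProbabilityTheory.beta_eq_betaIntegralReal a b ha hb
    rw [Complex.betaIntegral, intervalIntegral.integral_of_le zero_le_one,
      MeasureTheory.integral_Ioc_eq_integral_Ioo,
      MeasureTheory.setIntegral_congr_fun measurableSet_Ioo heq, integral_complex_ofReal,
      Complex.ofReal_re] at h2
    rw [← h2]; rfl

lemma ssb_I_plus :
    MeasureTheory.IntegrableOn (fun t : ℝ => 1 / √(t ^ 3 + 1)) (Set.Ioi 0) ∧
    ∫ t in Set.Ioi (0:ℝ), 1 / √(t ^ 3 + 1)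
      = (1 / 3) * (Real.Gamma (1/3) * Real.Gamma (1/6) / Real.Gamma (1/2)) := by
  let g : ℝ → ℝ := fun s => (s / (1 - s)) ^ (1/3 : ℝ)
  let g' : ℝ → ℝ := fun s => (1/3) * (s ^ (1/3 - 1 : ℝ) * (1 - s) ^ (- 4/3 : ℝ))
  have hpos : ∀ s ∈ Set.Ioo (0:ℝ) 1, 0 < s / (1 - s) := fun s hs =>
    div_pos hs.1 (by linarith [hs.2])
  have hcube : ∀ s ∈ Set.Ioo (0:ℝ) 1, (g s) ^ 3 = s / (1 - s) := by
    intro s hs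
    show ((s / (1 - s)) ^ (1/3 : ℝ)) ^ 3 = _
    rw [← Real.rpow_natCast, ← Real.rpow_mul (hpos s hs).le]
    norm_num
  have hgd : ∀ s ∈ Set.Ioo (0:ℝ) 1, HasDerivWithinAt g (g' s) (Set.Ioo 0 1) s := by
    intro s hs
    have h1 : 0 < 1 - s := by linarith [hs.2]
    have hd : HasDerivAt (fun s : ℝ => s / (1 - s)) (1 / (1 - s) ^ 2) s := by
      have := (hasDerivAt_id s).div ((hasDerivAt_id s).const_sub 1) h1.ne'
      refine this.congr_deriv ?_
      simp
    have hd2 := hd.rpow_const (p := 1/3) (Or.inl (hpos s hs).ne')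
    refine HasDerivAt.hasDerivWithinAt (hd2.congr_deriv ?_)
    symm
    show (1/3) * (s ^ (1/3 - 1 : ℝ) * (1 - s) ^ (- 4/3 : ℝ)) = _
    rw [Real.div_rpow hs.1.le h1.le]
    have e : (1 - s) ^ (-4/3 : ℝ) = ((1 - s) ^ 2)⁻¹ * ((1 - s) ^ (1/3 - 1 : ℝ))⁻¹ := by
      rw [← Real.rpow_natCast, ← Real.rpow_neg h1.le, ← Real.rpow_neg h1.le, ← Real.rpow_add h1]
      norm_num
    rw [e]
    field_simp
  have hinj : Set.InjOn g (Set.Ioo 0 1) := by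
    intro s hs t ht hst
    have h1 : 0 < 1 - s := by linarith [hs.2]
    have h2 : 0 < 1 - t := by linarith [ht.2]
    have := congrArg (· ^ 3) hst
    simp only [hcube s hs, hcube t ht] at this
    rw [div_eq_div_iff h1.ne' h2.ne'] at this
    linarith
  have himg : g '' Set.Ioo 0 1 = Set.Ioi 0 := by
    ext t
    constructor
    · rintro ⟨s, hs, rfl⟩
      exact Real.rpow_pos_of_pos (hpos s hs) _
    · intro (ht : 0 < t)
      have h3 : 0 < t ^ 3 := by positivity
      refine ⟨t ^ 3 / (1 + t ^ 3), ⟨by positivity, ?_⟩, ?_⟩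
      · rw [div_lt_one (by positivity)]; linarith
      · show ((t ^ 3 / (1 + t ^ 3)) / (1 - t ^ 3 / (1 + t ^ 3))) ^ (1/3 : ℝ) = t
        have : (t ^ 3 / (1 + t ^ 3)) / (1 - t ^ 3 / (1 + t ^ 3)) = t ^ 3 := by
          field_simp; ring
        rw [this, ← Real.rpow_natCast, ← Real.rpow_mul ht.le]
        norm_num
  have heq : Set.EqOn (fun s => |g' s| • (1 / √((g s) ^ 3 + 1)))
      (fun s => (1/3) * (s ^ (1/3 - 1 : ℝ) * (1 - s) ^ (1/6 - 1 : ℝ))) (Set.Ioo 0 1) := by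
    intro s hs
    have h1 : 0 < 1 - s := by linarith [hs.2]
    have hs0 := hs.1
    have hg' : 0 ≤ g' s := by
      show 0 ≤ (1/3) * (s ^ (1/3 - 1 : ℝ) * (1 - s) ^ (- 4/3 : ℝ))
      positivity
    have e1 : s / (1 - s) + 1 = (1 - s)⁻¹ := by field_simp; ring
    simp only [hcube s hs, abs_of_nonneg hg', e1, smul_eq_mul]
    rw [Real.sqrt_inv, one_div, inv_inv, Real.sqrt_eq_rpow]
    show (1/3) * (s ^ (1/3 - 1 : ℝ) * (1 - s) ^ (- 4/3 : ℝ)) * _ = _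
    rw [mul_assoc, mul_assoc, ← Real.rpow_add h1]
    norm_num
  have hB := ssb_real_beta (a := 1/3) (b := 1/6) (by norm_num) (by norm_num)
  constructor
  · rw [← himg, MeasureTheory.integrableOn_image_iff_integrableOn_abs_deriv_smul
      measurableSet_Ioo hgd hinj, MeasureTheory.integrableOn_congr_fun heq measurableSet_Ioo]
    exact hB.1.const_mul _
  · rw [← himg, MeasureTheory.integral_image_eq_integral_abs_deriv_smul
      measurableSet_Ioo hgd hinj, MeasureTheory.setIntegral_congr_fun measurableSet_Ioo heq,
      MeasureTheory.integral_const_mul, hB.2]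
    norm_num

lemma ssb_J :
    ∫ t in (0:ℝ)..1, √(1 - t ^ 3)
      = (1 / 3) * (Real.Gamma (1/3) * Real.Gamma (3/2) / Real.Gamma (11/6)) := by
  let g : ℝ → ℝ := fun s => s ^ (1/3 : ℝ)
  let g' : ℝ → ℝ := fun s => (1/3) * (s ^ (1/3 - 1 : ℝ))
  have hcube : ∀ s ∈ Set.Ioo (0:ℝ) 1, (g s) ^ 3 = s := by
    intro s hs
    show (s ^ (1/3 : ℝ)) ^ 3 = _
    rw [← Real.rpow_natCast, ← Real.rpow_mul hs.1.le]
    norm_num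
  have hgd : ∀ s ∈ Set.Ioo (0:ℝ) 1, HasDerivWithinAt g (g' s) (Set.Ioo 0 1) s := by
    intro s hs
    exact (Real.hasDerivAt_rpow_const (Or.inl hs.1.ne')).hasDerivWithinAt
  have hinj : Set.InjOn g (Set.Ioo 0 1) := by
    intro s hs t ht hst
    have := congrArg (· ^ 3) hst
    simpa only [hcube s hs, hcube t ht] using this
  have himg : g '' Set.Ioo 0 1 = Set.Ioo 0 1 := by
    ext t
    constructor
    · rintro ⟨s, hs, rfl⟩
      exact ⟨Real.rpow_pos_of_pos hs.1 _, Real.rpow_lt_one hs.1.le hs.2 (by norm_num)⟩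
    · intro ht
      have h0 := ht.1
      refine ⟨t ^ 3, ⟨by positivity, pow_lt_one₀ ht.1.le ht.2 (by norm_num)⟩, ?_⟩
      show (t ^ 3) ^ (1/3 : ℝ) = t
      rw [← Real.rpow_natCast, ← Real.rpow_mul ht.1.le]
      norm_num
  have heq : Set.EqOn (fun s => |g' s| • (√(1 - (g s) ^ 3)))
      (fun s => (1/3) * (s ^ (1/3 - 1 : ℝ) * (1 - s) ^ (3/2 - 1 : ℝ))) (Set.Ioo 0 1) := by
    intro s hs
    have hs0 := hs.1
    have hg' : 0 ≤ g' s := by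
      show 0 ≤ (1/3) * (s ^ (1/3 - 1 : ℝ))
      positivity
    simp only [hcube s hs, abs_of_nonneg hg', smul_eq_mul]
    rw [Real.sqrt_eq_rpow]
    show (1/3) * (s ^ (1/3 - 1 : ℝ)) * _ = _
    norm_num [mul_assoc]
  have hB := ssb_real_beta (a := 1/3) (b := 3/2) (by norm_num) (by norm_num)
  rw [intervalIntegral.integral_of_le zero_le_one, MeasureTheory.integral_Ioc_eq_integral_Ioo,
    ← himg, MeasureTheory.integral_image_eq_integral_abs_deriv_smul
      measurableSet_Ioo hgd hinj, MeasureTheory.setIntegral_congr_fun measurableSet_Ioo heq,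
      MeasureTheory.integral_const_mul, hB.2]
  norm_num

lemma ssb_K_eq :
    (3/5) * ∫ t in Set.Ioi (0:ℝ), 1 / √(t ^ 3 + 1) = 2 * ∫ t in (0:ℝ)..1, √(1 - t ^ 3) := by
  rw [ssb_I_plus.2, ssb_J]
  have h1 : Real.Gamma (3/2) = 1/2 * Real.Gamma (1/2) := by
    rw [← Real.Gamma_add_one (by norm_num)]; norm_num
  have h2 : Real.Gamma (11/6) = 5/6 * Real.Gamma (5/6) := by
    rw [← Real.Gamma_add_one (by norm_num)]; norm_num
  have h3 := Real.Gamma_mul_Gamma_one_sub (1/6)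
  rw [show Real.pi * (1/6) = Real.pi / 6 by ring, Real.sin_pi_div_six] at h3
  norm_num at h3
  have h4 : Real.Gamma (1/2) * Real.Gamma (1/2) = Real.pi := by
    rw [Real.Gamma_one_half_eq, Real.mul_self_sqrt Real.pi_pos.le]
  have p1 : 0 < Real.Gamma (1/2) := Real.Gamma_pos_of_pos (by norm_num)
  have p2 : 0 < Real.Gamma (5/6) := Real.Gamma_pos_of_pos (by norm_num)
  have h5 : Real.Gamma (1/6) = 2 * (Real.Gamma (1/2) * Real.Gamma (1/2)) / Real.Gamma (5/6) := by
    rw [h4, eq_div_iff p2.ne']; norm_num; linarith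
  rw [h1, h2, h5]
  field_simp
  norm_num

/-- Comparison lemma, forward in time. -/
lemma ssb_compare {u u' u'' : ℝ → ℂ} {H H' H'' : ℝ → ℝ} {q : ℝ → ℝ} {X : ℝ} (hX : 0 ≤ X)
    (hu : ∀ t ∈ Set.Icc 0 X, HasDerivAt u (u' t) t)
    (hu' : ∀ t ∈ Set.Icc 0 X, HasDerivAt u' (u'' t) t)
    (hH : ∀ t ∈ Set.Icc 0 X, HasDerivAt H (H' t) t)
    (hH' : ∀ t ∈ Set.Icc 0 X, HasDerivAt H' (H'' t) t)
    (hq : ∀ t ∈ Set.Icc 0 X, 0 ≤ q t)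
    (hub : ∀ t ∈ Set.Icc 0 X, ‖u'' t‖ ≤ q t * ‖u t‖)
    (hHb : ∀ t ∈ Set.Icc 0 X, q t * H t ≤ H'' t)
    (h0 : ‖u 0‖ < H 0) (h0' : ‖u' 0‖ ≤ H' 0) : ‖u X‖ ≤ H X := by
  have huc : ContinuousOn u (Set.Icc 0 X) := fun t ht => (hu t ht).continuousAt.continuousWithinAt
  have hHc : ContinuousOn H (Set.Icc 0 X) := fun t ht => (hH t ht).continuousAt.continuousWithinAt
  have huc' : ContinuousOn u' (Set.Icc 0 X) :=
    fun t ht => (hu' t ht).continuousAt.continuousWithinAt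
  have hHc' : ContinuousOn H' (Set.Icc 0 X) :=
    fun t ht => (hH' t ht).continuousAt.continuousWithinAt
  by_contra hcon
  push Not at hcon
  let S : Set ℝ := Set.Icc 0 X ∩ (fun t => H t - ‖u t‖) ⁻¹' Set.Iic 0
  have hSc : IsClosed S :=
    (hHc.sub huc.norm).preimage_isClosed_of_isClosed isClosed_Icc isClosed_Iic
  have hSne : S.Nonempty := ⟨X, ⟨hX, le_refl X⟩, by
    show H X - ‖u X‖ ≤ 0
    linarith⟩
  have hScomp : IsCompact S := isCompact_Icc.of_isClosed_subset hSc Set.inter_subset_left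
  obtain ⟨T, ⟨hT, hTle⟩, hTmin⟩ := hScomp.exists_isLeast hSne
  have hTle' : H T - ‖u T‖ ≤ 0 := hTle
  have hsub : Set.Icc 0 T ⊆ Set.Icc 0 X := Set.Icc_subset_Icc_right hT.2
  have hlt : ∀ t ∈ Set.Ico 0 T, ‖u t‖ < H t := by
    intro t ht
    by_contra hc
    have : T ≤ t := hTmin ⟨hsub ⟨ht.1, ht.2.le⟩, by
      show H t - ‖u t‖ ≤ 0
      linarith⟩
    linarith [ht.2]
  have hd : ∀ ⦃t⦄, t ∈ Set.Icc 0 T → ‖u' t‖ ≤ H' t := by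
    refine image_norm_le_of_norm_deriv_right_le_deriv_boundary' (f' := u'') (B' := H'')
      (huc'.mono hsub) ?_ h0' (hHc'.mono hsub) ?_ ?_
    · intro t ht
      exact (hu' t (hsub ⟨ht.1, ht.2.le⟩)).hasDerivWithinAt
    · intro t ht
      exact (hH' t (hsub ⟨ht.1, ht.2.le⟩)).hasDerivWithinAt
    · intro t ht
      have hm := hsub ⟨ht.1, ht.2.le⟩
      exact (hub t hm).trans ((mul_le_mul_of_nonneg_left (hlt t ht).le (hq t hm)).trans (hHb t hm))
  have hf : ∀ ⦃t⦄, t ∈ Set.Icc 0 T → ‖u t‖ ≤ H t - (H 0 - ‖u 0‖) := by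
    refine image_norm_le_of_norm_deriv_right_le_deriv_boundary' (f' := u') (B' := H')
      (huc.mono hsub) ?_ (by simp) ((hHc.mono hsub).sub continuousOn_const) ?_ ?_
    · intro t ht
      exact (hu t (hsub ⟨ht.1, ht.2.le⟩)).hasDerivWithinAt
    · intro t ht
      exact ((hH t (hsub ⟨ht.1, ht.2.le⟩)).sub_const _).hasDerivWithinAt
    · intro t ht
      exact hd ⟨ht.1, ht.2.le⟩
  have := hf (t := T) ⟨hT.1, le_refl T⟩
  linarith

/-- The primitive of `√(t³+ν)`. -/
noncomputable def ssbPhi (ν x : ℝ) : ℝ := ∫ t in (0:ℝ)..x, √(t ^ 3 + ν)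

lemma ssbPhi_deriv (ν x : ℝ) : HasDerivAt (ssbPhi ν) (√(x ^ 3 + ν)) x := by
  have hc : Continuous (fun t : ℝ => √(t ^ 3 + ν)) := by fun_prop
  exact intervalIntegral.integral_hasDerivAt_right (hc.intervalIntegrable _ _)
    (hc.stronglyMeasurableAtFilter _ _) hc.continuousAt

/-- minus the logarithmic derivative of the supersolution. -/
noncomputable def ssbP (ν x : ℝ) : ℝ := √(x ^ 3 + ν) + 3 * x ^ 2 / (4 * (x ^ 3 + ν))

/-- The supersolution. -/
noncomputable def ssbH (c ν x : ℝ) : ℝ :=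
  Real.exp (c - ssbPhi ν x - Real.log (x ^ 3 + ν) / 4)

lemma ssbH_deriv {c ν x : ℝ} (hQ : 0 < x ^ 3 + ν) :
    HasDerivAt (ssbH c ν) (-(ssbP ν x * ssbH c ν x)) x := by
  have hQd : HasDerivAt (fun x : ℝ => x ^ 3 + ν) (3 * x ^ 2) x := by
    simpa using (hasDerivAt_pow 3 x).add_const ν
  have h := ((((ssbPhi_deriv ν x).const_sub c).sub ((hQd.log hQ.ne').div_const 4))).exp
  refine h.congr_deriv ?_
  simp only [ssbH, ssbP]
  field_simp
  simp
  ring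

lemma ssbP_deriv {ν x : ℝ} (hQ : 0 < x ^ 3 + ν) :
    HasDerivAt (ssbP ν) (3 * x ^ 2 / (2 * √(x ^ 3 + ν)) +
      (6 * x / (4 * (x ^ 3 + ν)) - 9 * x ^ 4 / (4 * (x ^ 3 + ν) ^ 2))) x := by
  have hQd : HasDerivAt (fun x : ℝ => x ^ 3 + ν) (3 * x ^ 2) x := by
    simpa using (hasDerivAt_pow 3 x).add_const ν
  have hn : HasDerivAt (fun x : ℝ => 3 * x ^ 2) (6 * x) x := by
    have := (hasDerivAt_pow 2 x).const_mul 3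
    refine this.congr_deriv ?_
    norm_num; ring
  have h := (hQd.sqrt hQ.ne').add (hn.div (hQd.const_mul 4) (by positivity))
  refine h.congr_deriv ?_
  field_simp
  ring

lemma ssbH_ineq {ν μ x : ℝ} (hx : 0 ≤ x) (hμ : 0 ≤ μ) (hν : ν = μ + 2) :
    x ^ 3 + μ ≤ ssbP ν x ^ 2 - (3 * x ^ 2 / (2 * √(x ^ 3 + ν)) +
      (6 * x / (4 * (x ^ 3 + ν)) - 9 * x ^ 4 / (4 * (x ^ 3 + ν) ^ 2))) := by
  have hQ : 2 ≤ x ^ 3 + ν := by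
    have : 0 ≤ x ^ 3 := by positivity
    linarith
  have h1 : 6 * x / (4 * (x ^ 3 + ν)) ≤ 2 := by
    rw [div_le_iff₀ (by linarith)]
    nlinarith [mul_nonneg hx (sq_nonneg (x - 1)), sq_nonneg (x-1)]
  set s := √(x ^ 3 + ν) with hs
  have hs0 : 0 < s := Real.sqrt_pos.2 (by linarith)
  have hss : s ^ 2 = x ^ 3 + ν := Real.sq_sqrt (by linarith)
  have e : ssbP ν x ^ 2 - (3 * x ^ 2 / (2 * s) +
      (6 * x / (4 * (x ^ 3 + ν)) - 9 * x ^ 4 / (4 * (x ^ 3 + ν) ^ 2))) =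
      x ^ 3 + ν - 6 * x / (4 * (x ^ 3 + ν)) + 45 * x ^ 4 / (16 * (x ^ 3 + ν) ^ 2) := by
    simp only [ssbP, ← hs]
    rw [← hss]
    field_simp
    ring
  rw [e]
  have : 0 ≤ 45 * x ^ 4 / (16 * (x ^ 3 + ν) ^ 2) := by positivity
  linarith

/-- Bound at zero from data at `X`. -/
lemma ssb_bound_of_data {F : ℂ → ℂ} {lam : ℂ} (hF : Differentiable ℂ F)
    (hode : ∀ z, deriv (deriv F) z = (z ^ 3 + lam) * F z) {c X : ℝ} (hX : 0 ≤ X)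
    (h0 : ‖F X‖ < ssbH c (‖lam‖ + 2) X)
    (h1 : ‖deriv F X‖ ≤ ssbP (‖lam‖ + 2) X * ssbH c (‖lam‖ + 2) X) :
    ‖F 0‖ ≤ ssbH c (‖lam‖ + 2) 0 := by
  set ν := ‖lam‖ + 2 with hν
  have hdF : Differentiable ℂ (deriv F) := by
    have := hF.contDiff (n := 2)
    exact this.differentiable_deriv_two
  have hmem : ∀ t ∈ Set.Icc 0 X, 0 < (X - t) ^ 3 + ν := by
    intro t ht
    have : 0 ≤ X - t := by linarith [ht.2]
    positivity
  have hsub : ∀ t : ℝ, HasDerivAt (fun t : ℝ => X - t) (-1) t := fun t => by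
    simpa using (hasDerivAt_id t).const_sub X
  have hsubC : ∀ t : ℝ, HasDerivAt (fun t : ℝ => (((X - t : ℝ)) : ℂ)) (-1) t := fun t => by
    simpa using (hsub t).ofReal_comp
  have key := ssb_compare (u := fun t => F ((X - t : ℝ) : ℂ))
    (u' := fun t => -deriv F ((X - t : ℝ) : ℂ))
    (u'' := fun t => deriv (deriv F) ((X - t : ℝ) : ℂ))
    (H := fun t => ssbH c ν (X - t))
    (H' := fun t => ssbP ν (X - t) * ssbH c ν (X - t))
    (H'' := fun t => (ssbP ν (X - t) ^ 2 - (3 * (X - t) ^ 2 / (2 * √((X - t) ^ 3 + ν)) +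
      (6 * (X - t) / (4 * ((X - t) ^ 3 + ν)) - 9 * (X - t) ^ 4 / (4 * ((X - t) ^ 3 + ν) ^ 2))))
        * ssbH c ν (X - t))
    (q := fun t => (X - t) ^ 3 + ‖lam‖) hX ?_ ?_ ?_ ?_ ?_ ?_ ?_ (by simpa using h0)
    (by simpa using h1)
  · simpa using key
  · intro t ht
    have := (hF ((X - t : ℝ) : ℂ)).hasDerivAt.comp t (hsubC t)
    refine this.congr_deriv (by ring)
  · intro t ht
    have := ((hdF ((X - t : ℝ) : ℂ)).hasDerivAt.comp t (hsubC t)).neg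
    refine this.congr_deriv (by ring)
  · intro t ht
    have := (ssbH_deriv (c := c) (hmem t ht)).comp t (hsub t)
    refine this.congr_deriv (by ring)
  · intro t ht
    have := (((ssbP_deriv (hmem t ht)).mul (ssbH_deriv (c := c) (hmem t ht)))).comp t (hsub t)
    refine this.congr_deriv (by ring)
  · intro t ht
    have : 0 ≤ X - t := by linarith [ht.2]
    positivity
  · intro t ht
    have h3 : 0 ≤ X - t := by linarith [ht.2]
    show ‖deriv (deriv F) ((X - t : ℝ) : ℂ)‖ ≤ _
    rw [hode, norm_mul]
    gcongr
    refine (norm_add_le _ _).trans ?_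
    rw [norm_pow, Complex.norm_real, Real.norm_of_nonneg h3]
  · intro t ht
    have h3 : 0 ≤ X - t := by linarith [ht.2]
    exact mul_le_mul_of_nonneg_right (ssbH_ineq h3 (norm_nonneg lam) hν) (Real.exp_pos _).le

lemma ssbPhi_bound {ν X : ℝ} (hν : 0 < ν) (hX : 0 ≤ X) :
    ssbPhi ν X ≤ (2/5) * (X * √(X ^ 3 + ν)) +
      ((3/5) * ∫ t in Set.Ioi (0:ℝ), 1 / √(t ^ 3 + 1)) * ν ^ ((5:ℝ)/6) := by
  have hQ : ∀ t ∈ Set.uIcc 0 X, 0 < t ^ 3 + ν := by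
    intro t ht
    rw [Set.uIcc_of_le hX] at ht
    have := ht.1
    positivity
  have hc1 : Continuous (fun t : ℝ => √(t ^ 3 + ν)) := by fun_prop
  have hc2 : ContinuousOn (fun t : ℝ => 1 / √(t ^ 3 + ν)) (Set.uIcc 0 X) :=
    continuousOn_const.div hc1.continuousOn (fun t ht => (Real.sqrt_pos.2 (hQ t ht)).ne')
  have hi1 := hc1.intervalIntegrable (μ := MeasureTheory.volume) 0 X
  have hi2 := hc2.intervalIntegrable (μ := MeasureTheory.volume)
  have hparts : ∫ t in (0:ℝ)..X, ((5/2) * √(t ^ 3 + ν) - (3/2) * ν * (1 / √(t ^ 3 + ν)))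
      = X * √(X ^ 3 + ν) := by
    rw [intervalIntegral.integral_eq_sub_of_hasDerivAt (f := fun t => t * √(t ^ 3 + ν))]
    · simp
    · intro t ht
      have hq := hQ t ht
      have hQd : HasDerivAt (fun x : ℝ => x ^ 3 + ν) (3 * t ^ 2) t := by
        simpa using (hasDerivAt_pow 3 t).add_const ν
      have h := (hasDerivAt_id t).mul (hQd.sqrt hq.ne')
      refine h.congr_deriv ?_
      have hs0 : 0 < √(t ^ 3 + ν) := Real.sqrt_pos.2 hq
      have hss : √(t ^ 3 + ν) ^ 2 = t ^ 3 + ν := Real.sq_sqrt hq.le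
      simp only [id]
      field_simp
      rw [hss]
      ring
    · exact (hi1.const_mul _).sub (hi2.const_mul _)
  rw [intervalIntegral.integral_sub (hi1.const_mul _) (hi2.const_mul _),
    intervalIntegral.integral_const_mul, intervalIntegral.integral_const_mul] at hparts
  -- scaling
  set b : ℝ := ν ^ ((1:ℝ)/6) with hb
  have hb0 : 0 < b := Real.rpow_pos_of_pos hν _
  have hb6 : b ^ 6 = ν := by
    rw [hb, ← Real.rpow_natCast, ← Real.rpow_mul hν.le]; norm_num
  have hb5 : ν ^ ((5:ℝ)/6) = b ^ 5 := by
    rw [hb, ← Real.rpow_natCast, ← Real.rpow_mul hν.le]; norm_num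
  have hscale : ∀ t : ℝ, 1 / √(t ^ 3 + ν) = (b ^ 3)⁻¹ * (1 / √((t / b ^ 2) ^ 3 + 1)) := by
    intro t
    have e : t ^ 3 + ν = (b ^ 3) ^ 2 * ((t / b ^ 2) ^ 3 + 1) := by
      rw [← hb6]; field_simp
    rw [e, Real.sqrt_mul (by positivity), Real.sqrt_sq (by positivity)]
    rw [one_div, mul_inv, one_div]
  have hI : ∫ t in (0:ℝ)..X, 1 / √(t ^ 3 + ν)
      ≤ (b ^ 3)⁻¹ * (b ^ 2 * ∫ t in Set.Ioi (0:ℝ), 1 / √(t ^ 3 + 1)) := by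
    simp_rw [hscale]
    rw [intervalIntegral.integral_const_mul,
      intervalIntegral.integral_comp_div (fun t => 1 / √(t ^ 3 + 1)) (by positivity : b ^ 2 ≠ 0)]
    rw [zero_div, smul_eq_mul, intervalIntegral.integral_of_le (by positivity)]
    gcongr
    · filter_upwards with t
      positivity
    · exact ssb_I_plus.1
    · exact Set.Ioc_subset_Ioi_self
  have h5 : ν * ((b ^ 3)⁻¹ * (b ^ 2 * ∫ t in Set.Ioi (0:ℝ), 1 / √(t ^ 3 + 1)))
      = (∫ t in Set.Ioi (0:ℝ), 1 / √(t ^ 3 + 1)) * b ^ 5 := by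
    rw [← hb6]; field_simp
  have h6 := mul_le_mul_of_nonneg_left hI hν.le
  rw [h5] at h6
  rw [hb5]
  unfold ssbPhi
  linarith

lemma ssbPhi_bound' {ν Y : ℝ} (hν : 0 < ν) (hY1 : 1 ≤ Y) (hY : ν ≤ Y) :
    ssbPhi ν (Y ^ 2) ≤ (2/5) * Y ^ 5 + 1 +
      ((3/5) * ∫ t in Set.Ioi (0:ℝ), 1 / √(t ^ 3 + 1)) * ν ^ ((5:ℝ)/6) := by
  refine (ssbPhi_bound hν (by positivity)).trans ?_
  have hY0 : 0 < Y := by linarith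
  have h1 : √((Y ^ 2) ^ 3 + ν) ≤ Y ^ 3 + ν / (2 * Y ^ 3) := by
    rw [Real.sqrt_le_left (by positivity)]
    have : (Y ^ 3 + ν / (2 * Y ^ 3)) ^ 2 = (Y ^ 2) ^ 3 + ν + (ν / (2 * Y ^ 3)) ^ 2 := by
      field_simp; ring
    rw [this]
    nlinarith [sq_nonneg (ν / (2 * Y ^ 3))]
  have h2 : Y ^ 2 * √((Y ^ 2) ^ 3 + ν) ≤ Y ^ 5 + 1 := by
    calc Y ^ 2 * √((Y ^ 2) ^ 3 + ν) ≤ Y ^ 2 * (Y ^ 3 + ν / (2 * Y ^ 3)) := by gcongr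
      _ = Y ^ 5 + ν / (2 * Y) := by field_simp
      _ ≤ Y ^ 5 + 1 := by
        gcongr
        rw [div_le_one (by positivity)]
        linarith
  linarith

/-- Size of a standard solution near the large point `Y ^ 2`. -/
lemma ssb_asymp {F : ℂ → ℂ} {C R : ℝ} (hC : 0 < C)
    (h : ∀ z : ℂ, R ≤ ‖z‖ → |Complex.arg z| ≤ Real.pi / 2 →
      ‖F z * z ^ ((3 : ℂ) / 4) * Complex.exp ((2 / 5 : ℂ) * z ^ ((5 : ℂ) / 2)) - 1‖
        ≤ C * ‖z‖ ^ (-(1 / 2) : ℝ))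
    {Y : ℝ} (hY2 : 2 ≤ Y) (hYR : R ≤ Y) (hYC : C ^ 2 ≤ Y) {z : ℂ}
    (hz : ‖z - ((Y ^ 2 : ℝ) : ℂ)‖ ≤ (Y ^ 3)⁻¹) :
    ‖F z‖ ≤ Real.exp (10 - (3/2) * Real.log Y - (2/5) * Y ^ 5) := by
  have hY0 : 0 < Y := by linarith
  have hYsq : 2 * Y ≤ Y ^ 2 := by nlinarith
  have hr1 : (Y ^ 3)⁻¹ ≤ 1 := inv_le_one_of_one_le₀ (one_le_pow₀ (by linarith))
  have hball : ∀ w : ℂ, ‖w - ((Y ^ 2 : ℝ) : ℂ)‖ ≤ (Y ^ 3)⁻¹ →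
      0 < w.re ∧ Y ^ 2 / 2 ≤ ‖w‖ ∧ ‖w‖ ≤ 4 * Y ^ 2 := by
    intro w hw
    have h1 : |(w - ((Y ^ 2 : ℝ) : ℂ)).re| ≤ 1 := (Complex.abs_re_le_norm _).trans (hw.trans hr1)
    rw [Complex.sub_re, Complex.ofReal_re, abs_le] at h1
    have h2 := Complex.re_le_norm w
    have h3 : ‖w‖ ≤ ‖w - ((Y ^ 2 : ℝ) : ℂ)‖ + ‖((Y ^ 2 : ℝ) : ℂ)‖ := by
      have := norm_add_le (w - ((Y ^ 2 : ℝ) : ℂ)) ((Y ^ 2 : ℝ) : ℂ)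
      rwa [sub_add_cancel] at this
    rw [Complex.norm_real, Real.norm_of_nonneg (by positivity)] at h3
    refine ⟨?_, ?_, ?_⟩ <;> nlinarith
  obtain ⟨hre, hlo, hhi⟩ := hball z hz
  have hzY : Y ≤ ‖z‖ := by linarith
  have hz0 : 0 < ‖z‖ := by linarith
  -- the asymptotic relation gives a bound by two
  have hone : C * ‖z‖ ^ (-(1 / 2) : ℝ) ≤ 1 := by
    rw [Real.rpow_neg hz0.le, ← Real.sqrt_eq_rpow]
    have : C ≤ √‖z‖ := Real.le_sqrt_of_sq_le (by linarith)
    rw [← div_eq_mul_inv, div_le_one (by positivity)]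
    exact this
  have hA := (h z (by linarith) (Complex.abs_arg_le_pi_div_two_iff.2 hre.le)).trans hone
  have hB : ‖F z‖ * ‖z ^ ((3 : ℂ) / 4)‖ * ‖Complex.exp ((2 / 5 : ℂ) * z ^ ((5 : ℂ) / 2))‖ ≤ 2 := by
    rw [← norm_mul, ← norm_mul]
    have := norm_add_le
      (F z * z ^ ((3 : ℂ) / 4) * Complex.exp ((2 / 5 : ℂ) * z ^ ((5 : ℂ) / 2)) - 1) 1
    simp only [sub_add_cancel, norm_one] at this
    linarith
  -- the algebraic factor
  have hn1 : Real.exp ((3/2) * Real.log Y - 1) ≤ ‖z ^ ((3 : ℂ) / 4)‖ := by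
    have e : ((3 : ℂ) / 4) = (((3/4 : ℝ)) : ℂ) := by push_cast; rfl
    rw [e, Complex.norm_cpow_real, Real.rpow_def_of_pos hz0, Real.exp_le_exp]
    have h1 : Real.log (Y ^ 2 / 2) ≤ Real.log ‖z‖ := Real.log_le_log (by positivity) hlo
    rw [Real.log_div (by positivity) (by norm_num), Real.log_pow] at h1
    have h2 := Real.log_two_lt_d9
    push_cast at h1
    linarith
  -- the exponential factor
  have hdiff : ‖z ^ ((5 : ℂ) / 2) - ((Y ^ 2 : ℝ) : ℂ) ^ ((5 : ℂ) / 2)‖ ≤ 20 := by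
    have hconv : Convex ℝ (Metric.closedBall (((Y ^ 2 : ℝ) : ℂ)) ((Y ^ 3)⁻¹)) :=
      convex_closedBall _ _
    have := hconv.norm_image_sub_le_of_norm_hasDerivWithin_le (𝕜 := ℂ)
      (f := fun w : ℂ => w ^ ((5 : ℂ) / 2))
      (f' := fun w : ℂ => ((5 : ℂ) / 2) * w ^ ((5 : ℂ) / 2 - 1))
      (C := 20 * Y ^ 3) (x := ((Y ^ 2 : ℝ) : ℂ)) (y := z) ?_ ?_ ?_ ?_
    · refine this.trans ?_
      calc 20 * Y ^ 3 * ‖z - ((Y ^ 2 : ℝ) : ℂ)‖ ≤ 20 * Y ^ 3 * (Y ^ 3)⁻¹ := by gcongr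
        _ = 20 := by field_simp
    · intro w hw
      rw [mem_closedBall_iff_norm] at hw
      obtain ⟨h1, -, -⟩ := hball w hw
      have := (hasDerivAt_id w).cpow_const (c := (5 : ℂ) / 2) (Or.inl h1)
      simpa using this.hasDerivWithinAt
    · intro w hw
      rw [mem_closedBall_iff_norm] at hw
      obtain ⟨h1, h2, h3⟩ := hball w hw
      have e : ((5 : ℂ) / 2 - 1) = (((3/2 : ℝ)) : ℂ) := by push_cast; norm_num
      rw [e, norm_mul, Complex.norm_cpow_real]
      have h4 : ‖w‖ ^ (3/2 : ℝ) ≤ 8 * Y ^ 3 := by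
        calc ‖w‖ ^ (3/2 : ℝ) ≤ ((2 * Y) ^ 2) ^ (3/2 : ℝ) := by
              apply Real.rpow_le_rpow (norm_nonneg _) _ (by norm_num)
              nlinarith
          _ = (2 * Y) ^ 3 := by
              rw [← Real.rpow_natCast, ← Real.rpow_mul (by positivity), ← Real.rpow_natCast]
              norm_num
          _ = 8 * Y ^ 3 := by ring
      have h5 : ‖(5 : ℂ) / 2‖ = 5 / 2 := by simp
      rw [h5]
      linarith
    · simpa using (by positivity : (0:ℝ) ≤ (Y ^ 3)⁻¹)
    · rw [mem_closedBall_iff_norm]; exact hz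
  have hYpow : ((Y ^ 2 : ℝ) : ℂ) ^ ((5 : ℂ) / 2) = ((Y ^ 5 : ℝ) : ℂ) := by
    have e : ((5 : ℂ) / 2) = (((5/2 : ℝ)) : ℂ) := by push_cast; rfl
    rw [e, ← Complex.ofReal_cpow (by positivity)]
    congr 1
    rw [← Real.rpow_natCast, ← Real.rpow_mul (by positivity), ← Real.rpow_natCast]
    norm_num
  have hn2 : Real.exp ((2/5) * Y ^ 5 - 8) ≤
      ‖Complex.exp ((2 / 5 : ℂ) * z ^ ((5 : ℂ) / 2))‖ := by
    rw [Complex.norm_exp, Real.exp_le_exp]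
    have e : (2 / 5 : ℂ) = ((2/5 : ℝ) : ℂ) := by push_cast; rfl
    rw [e, Complex.re_ofReal_mul]
    have h1 := (Complex.abs_re_le_norm _).trans hdiff
    rw [hYpow, Complex.sub_re, Complex.ofReal_re, abs_le] at h1
    linarith [h1.1]
  have hfin : ‖F z‖ * (Real.exp ((3/2) * Real.log Y - 1) * Real.exp ((2/5) * Y ^ 5 - 8)) ≤ 2 := by
    refine le_trans ?_ hB
    rw [mul_assoc]
    gcongr
  rw [← Real.exp_add] at hfin
  have h2e : (2:ℝ) ≤ Real.exp 1 := by
    have := Real.add_one_le_exp 1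
    linarith
  rw [← le_div_iff₀ (Real.exp_pos _)] at hfin
  refine hfin.trans ?_
  rw [div_le_iff₀ (Real.exp_pos _), ← Real.exp_add]
  refine h2e.trans (Real.exp_le_exp.2 ?_)
  linarith

lemma ssb_main_bound {F : ℂ → ℂ} {lam : ℂ} (hF : Differentiable ℂ F)
    (hode : ∀ z, deriv (deriv F) z = (z ^ 3 + lam) * F z) {C R : ℝ} (hC : 0 < C)
    (h : ∀ z : ℂ, R ≤ ‖z‖ → |Complex.arg z| ≤ Real.pi / 2 →
      ‖F z * z ^ ((3 : ℂ) / 4) * Complex.exp ((2 / 5 : ℂ) * z ^ ((5 : ℂ) / 2)) - 1‖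
        ≤ C * ‖z‖ ^ (-(1 / 2) : ℝ)) :
    ‖F 0‖ ≤ Real.exp (((3/5) * ∫ t in Set.Ioi (0:ℝ), 1 / √(t ^ 3 + 1)) *
      (‖lam‖ + 2) ^ ((5:ℝ)/6) + 20) := by
  set K := (3/5) * ∫ t in Set.Ioi (0:ℝ), 1 / √(t ^ 3 + 1) with hK
  set ν := ‖lam‖ + 2 with hν
  have hν2 : 2 ≤ ν := by have := norm_nonneg lam; linarith
  obtain ⟨Y, hY⟩ : ∃ Y : ℝ, Y = 2 + |R| + C ^ 2 + ν := ⟨_, rfl⟩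
  have hRa := le_abs_self R
  have hRn := abs_nonneg R
  have hC2 := sq_nonneg C
  have hY2 : 2 ≤ Y := by linarith
  have hY0 : 0 < Y := by linarith
  have hYR : R ≤ Y := by linarith
  have hYC : C ^ 2 ≤ Y := by linarith
  have hYν : ν ≤ Y := by linarith
  have hbd := fun z hz => ssb_asymp (F := F) hC h hY2 hYR hYC (z := z) hz
  set B := Real.exp (10 - (3/2) * Real.log Y - (2/5) * Y ^ 5) with hBdef
  have hF0 : ‖F ((Y ^ 2 : ℝ) : ℂ)‖ ≤ B := hbd _ (by simp; positivity)
  have hF1 : ‖deriv F ((Y ^ 2 : ℝ) : ℂ)‖ ≤ B / (Y ^ 3)⁻¹ := by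
    refine Complex.norm_deriv_le_of_forall_mem_sphere_norm_le (by positivity)
      hF.diffContOnCl ?_
    intro z hz
    rw [mem_sphere_iff_norm] at hz
    exact hbd z hz.le
  have hBH : B < ssbH (K * ν ^ ((5:ℝ)/6) + 20) ν (Y ^ 2) := by
    rw [hBdef, ssbH, Real.exp_lt_exp]
    have h1 := ssbPhi_bound' (by linarith : 0 < ν) (by linarith) hYν
    rw [← hK] at h1
    have h2 : Real.log ((Y ^ 2) ^ 3 + ν) ≤ 6 * Real.log Y + 1 := by
      have h3 : (Y ^ 2) ^ 3 + ν ≤ 2 * Y ^ 6 := by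
        have : Y ≤ Y ^ 6 := le_self_pow₀ (by linarith) (by norm_num)
        have e : (Y ^ 2) ^ 3 = Y ^ 6 := by ring
        linarith
      refine (Real.log_le_log (by positivity) h3).trans ?_
      rw [Real.log_mul (by norm_num) (by positivity), Real.log_pow]
      have := Real.log_two_lt_d9
      push_cast
      linarith
    linarith
  have hP : Y ^ 3 ≤ ssbP ν (Y ^ 2) := by
    have h1 : Y ^ 3 ≤ √((Y ^ 2) ^ 3 + ν) := by
      apply Real.le_sqrt_of_sq_le
      have e : (Y ^ 2) ^ 3 = (Y ^ 3) ^ 2 := by ring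
      linarith
    have h2 : 0 ≤ 3 * (Y ^ 2) ^ 2 / (4 * ((Y ^ 2) ^ 3 + ν)) := by positivity
    unfold ssbP
    linarith
  have hB0 : 0 < B := Real.exp_pos _
  have hfin := ssb_bound_of_data hF hode (c := K * ν ^ ((5:ℝ)/6) + 20) (X := Y ^ 2)
    (by positivity) (hF0.trans_lt hBH) (by
      refine hF1.trans ?_
      rw [div_inv_eq_mul, mul_comm]
      exact mul_le_mul hP hBH.le hB0.le ((by positivity : (0:ℝ) ≤ Y ^ 3).trans hP))
  refine hfin.trans ?_
  rw [ssbH, Real.exp_le_exp]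
  have hlog : 0 ≤ Real.log ν := Real.log_nonneg (by linarith)
  simp [ssbPhi]
  linarith

theorem std_solution_global_bound (f : ℂ → ℂ → ℂ) (hf : IsStdSolutionFamily f)
    (K : ℝ) (hK : K = 2 * ∫ t in (0:ℝ)..1, Real.sqrt (1 - t ^ 3)) :
    ∀ Ktilde : ℝ, K < Ktilde → ∃ C > (0 : ℝ), ∀ lam : ℂ,
      ‖f 0 lam‖ ≤ C * Real.exp (Ktilde * ‖lam‖ ^ ((5 : ℝ) / 6)) := by
  intro Kt hKt
  have hK0 : 0 ≤ K := by
    rw [hK]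
    have : 0 ≤ ∫ t in (0:ℝ)..1, √(1 - t ^ 3) :=
      intervalIntegral.integral_nonneg zero_le_one (fun t _ => Real.sqrt_nonneg _)
    linarith
  refine ⟨Real.exp (K * 2 ^ ((5:ℝ)/6) + 20), Real.exp_pos _, fun lam => ?_⟩
  obtain ⟨C, hC, R, hR, h⟩ := hf.2 (Real.pi / 10) (by positivity) {lam} isCompact_singleton
  have h1 := ssb_main_bound (F := fun z => f z lam) (hf.1 lam).1 (hf.1 lam).2 hC (R := R)
    (fun z hz ha => h lam rfl z hz (by linarith))
  refine h1.trans ?_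
  rw [ssb_K_eq, ← hK, ← Real.exp_add, Real.exp_le_exp]
  have h2 : (‖lam‖ + 2) ^ ((5:ℝ)/6) ≤ ‖lam‖ ^ ((5:ℝ)/6) + 2 ^ ((5:ℝ)/6) :=
    Real.rpow_add_le_add_rpow (norm_nonneg _) (by norm_num) (by norm_num) (by norm_num)
  have h3 : 0 ≤ ‖lam‖ ^ ((5:ℝ)/6) := by positivity
  nlinarith [mul_le_mul_of_nonneg_left h2 hK0, mul_le_mul_of_nonneg_right hKt.le h3]
end

section
/- Let f be a standard solution family and set ω = e^{2πi/5}. Then for every λ ∈ ℂ there exists C ∈ ℂ such that f(ω·z, ω³·λ) + ω·f(ω^{−1}·z, ω^{−3}·λ) = C·f(z, λ) for all z ∈ ℂ. (Stokes relation f₋ + ω·f₊ = C(λ)·f.) -/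
open Complex

open Filter Topology

/-- A vector-valued form of the L Hopital rule at infinity. -/
lemma lhop (u : ℝ → ℂ) (E E' : ℝ → ℝ) (g : ℝ → ℂ) (l : ℂ)
    (hE : ∀ᶠ r in atTop, HasDerivAt E (E' r) r) (hpos : ∀ᶠ r in atTop, 0 ≤ E' r)
    (hu : ∀ᶠ r in atTop, HasDerivAt u ((E' r : ℂ) * g r) r)
    (hg : Tendsto g atTop (𝓝 l)) (hEinf : Tendsto E atTop atTop)
    (h0 : Tendsto (fun r => u r / (E r : ℂ)) atTop (𝓝 0)) : l = 0 := by
  have key : ∀ ε > (0 : ℝ), ‖l‖ ≤ 3 * ε := by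
    intro ε hε
    have hg' : ∀ᶠ r in atTop, ‖g r - l‖ ≤ ε := by
      have := (Metric.tendsto_nhds.1 hg) ε hε
      filter_upwards [this] with r hr
      rw [dist_eq_norm] at hr; exact hr.le
    obtain ⟨a, ha⟩ := eventually_atTop.1 (hE.and (hpos.and (hu.and hg')))
    set v : ℝ → ℂ := fun r => u r - l * (E r : ℂ) with hv
    have hvd : ∀ r, a ≤ r → HasDerivAt v ((E' r : ℂ) * (g r - l)) r := by
      intro r hr
      obtain ⟨h1, -, h3, -⟩ := ha r hr
      have := h3.sub ((h1.ofReal_comp).const_mul l)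
      refine HasDerivAt.congr_deriv this ?_
      ring
    have bound : ∀ r, a ≤ r → ‖v r‖ ≤ ‖v a‖ + ε * (E r - E a) := by
      intro r hr
      refine image_norm_le_of_norm_deriv_right_le_deriv_boundary' (a := a) (b := r)
        (f := v) (f' := fun r => (E' r : ℂ) * (g r - l))
        (B := fun r => ‖v a‖ + ε * (E r - E a)) (B' := fun r => ε * E' r)
        ?_ ?_ ?_ ?_ ?_ ?_ ⟨hr, le_refl _⟩
      · intro x hx; exact (hvd x hx.1).continuousAt.continuousWithinAt
      · intro x hx; exact (hvd x hx.1).hasDerivWithinAt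
      · simp
      · intro x hx
        exact ((((ha x hx.1).1.continuousAt.sub continuousAt_const).const_mul ε).const_add _).continuousWithinAt
      · intro x hx
        exact ((((ha x hx.1).1.sub_const _).const_mul ε).const_add _).hasDerivWithinAt
      · intro x hx
        obtain ⟨-, h2, -, h4⟩ := ha x hx.1
        rw [norm_mul, Complex.norm_real, Real.norm_of_nonneg h2, mul_comm]
        exact mul_le_mul_of_nonneg_right h4 h2
    have hu' : ∀ᶠ r in atTop, ‖u r / (E r : ℂ)‖ ≤ ε := by
      filter_upwards [(Metric.tendsto_nhds.1 h0) ε hε] with r hr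
      rw [dist_zero_right] at hr; exact hr.le
    obtain ⟨r, h1, h2, h3, h4⟩ := (hu'.and ((eventually_ge_atTop a).and
      ((hEinf.eventually_ge_atTop 1).and
        (hEinf.eventually_ge_atTop ((‖v a‖ - ε * E a) / ε))))).exists
    have hEp : 0 < E r := by linarith
    have h5 : ‖u r‖ ≤ ε * E r := by
      rw [norm_div, Complex.norm_real, Real.norm_of_nonneg hEp.le, div_le_iff₀ hEp] at h1
      exact h1
    have h6 := bound r h2
    have h7 : ‖v a‖ - ε * E a ≤ ε * E r := by
      rw [div_le_iff₀ hε] at h4; linarith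
    have h8 : ‖l‖ * E r ≤ ‖u r‖ + ‖v r‖ := by
      have : l * (E r : ℂ) = u r - v r := by simp [hv]
      calc ‖l‖ * E r = ‖l * (E r : ℂ)‖ := by
            rw [norm_mul, Complex.norm_real, Real.norm_of_nonneg hEp.le]
        _ ≤ _ := by rw [this]; exact norm_sub_le _ _
    have : ‖l‖ * E r ≤ (3 * ε) * E r := by linarith
    exact le_of_mul_le_mul_right this hEp
  have : ‖l‖ ≤ 0 := by
    apply le_of_forall_pos_le_add
    intro ε hε
    have := key (ε / 3) (by positivity)
    linarith
  exact norm_le_zero_iff.1 this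

/-- The Liouville-Green asymptotics along one ray. -/
lemma ray (f : ℂ → ℂ → ℂ) (hf : IsStdSolutionFamily f) (lam : ℂ) (θ : ℝ)
    (hθ : |θ| ≤ 2 * Real.pi / 5) :
    Tendsto (fun r : ℝ => f (r * exp (θ * I)) lam *
      ((r ^ (3 / 4 : ℝ) : ℝ) * exp (3 / 4 * (θ * I))) *
      exp ((2 / 5 : ℂ) * ((r ^ (5 / 2 : ℝ) : ℝ) * exp (5 / 2 * (θ * I))))) atTop (𝓝 1) := by
  have hpi := Real.pi_pos
  obtain ⟨C, hC, R, hR, h⟩ := hf.2 (Real.pi / 5) (by positivity) {lam} isCompact_singleton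
  have harg : ∀ r : ℝ, 0 < r → arg (r * exp (θ * I)) = θ := by
    intro r hr
    rw [exp_mul_I]
    apply arg_mul_cos_add_sin_mul_I hr
    have := abs_le.1 hθ
    constructor <;> linarith
  have hpow : ∀ (r : ℝ) (s : ℝ), 0 < r →
      ((r : ℂ) * exp (θ * I)) ^ (s : ℂ) = (r ^ s : ℝ) * exp (s * (θ * I)) := by
    intro r s hr
    have hne : (r : ℂ) * exp (θ * I) ≠ 0 :=
      mul_ne_zero (by exact_mod_cast hr.ne') (exp_ne_zero _)
    have hn : ‖(r : ℂ) * exp (θ * I)‖ = r := by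
      rw [norm_mul, norm_exp_ofReal_mul_I, Complex.norm_real, Real.norm_of_nonneg hr.le, mul_one]
    rw [cpow_def_of_ne_zero hne, Complex.log, harg r hr, hn, Real.rpow_def_of_pos hr, ofReal_exp,
      ← Complex.exp_add]
    congr 1
    push_cast
    ring
  rw [tendsto_iff_norm_sub_tendsto_zero]
  have hlim : Tendsto (fun r : ℝ => C * r ^ (-(1 / 2) : ℝ)) atTop (𝓝 0) := by
    have := (tendsto_rpow_neg_atTop (y := 1/2) (by norm_num)).const_mul C
    simpa using this
  refine squeeze_zero' (Eventually.of_forall fun _ => norm_nonneg _) ?_ hlim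
  filter_upwards [eventually_ge_atTop R] with r hr
  have hr0 : 0 < r := by linarith
  have hn : ‖(r : ℂ) * exp (θ * I)‖ = r := by
    rw [norm_mul, norm_exp_ofReal_mul_I, Complex.norm_real, Real.norm_of_nonneg hr0.le, mul_one]
  have := h lam rfl (r * exp (θ * I)) (by rw [hn]; exact hr)
    (by rw [harg r hr0]; linarith)
  rw [hn] at this
  have e1 := hpow r (3/4) hr0
  have e2 := hpow r (5/2) hr0
  push_cast at e1 e2
  rw [e1, e2] at this
  exact this

/-- Constancy of the Wronskian. -/
lemma wronskian_const (h g : ℂ → ℂ) (q : ℂ → ℂ) (hh : Differentiable ℂ h)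
    (hg : Differentiable ℂ g) (h2 : ∀ z, deriv (deriv h) z = q z * h z)
    (g2 : ∀ z, deriv (deriv g) z = q z * g z) :
    ∃ c, ∀ z, deriv h z * g z - h z * deriv g z = c := by
  have hh' : Differentiable ℂ (deriv h) := hh.deriv
  have hg' : Differentiable ℂ (deriv g) := hg.deriv
  refine ⟨deriv h 0 * g 0 - h 0 * deriv g 0, fun z => ?_⟩
  have hd : ∀ z, HasDerivAt (fun z => deriv h z * g z - h z * deriv g z) 0 z := by
    intro z
    have := ((hh' z).hasDerivAt.mul (hg z).hasDerivAt).sub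
      ((hh z).hasDerivAt.mul (hg' z).hasDerivAt)
    refine HasDerivAt.congr_deriv this ?_
    rw [h2, g2]; ring
  exact is_const_of_deriv_eq_zero (fun z => (hd z).differentiableAt)
    (fun z => (hd z).deriv) z 0

lemma prop_of_wronskian (h g : ℂ → ℂ) (hh : Differentiable ℂ h)
    (hg : Differentiable ℂ g) (z₀ : ℂ) (hz : g z₀ ≠ 0)
    (hw : ∀ z, deriv h z * g z - h z * deriv g z = 0) : ∃ C, ∀ z, h z = C * g z := by
  refine ⟨h z₀ / g z₀, ?_⟩
  have hne : ∀ᶠ z in 𝓝 z₀, g z ≠ 0 := (hg z₀).continuousAt.eventually_ne hz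
  obtain ⟨δ, hδ, hball⟩ := Metric.eventually_nhds_iff_ball.1 hne
  have hd : ∀ z ∈ Metric.ball z₀ δ, HasDerivAt (fun z => h z / g z) 0 z := by
    intro z hzb
    have := (hh z).hasDerivAt.div (hg z).hasDerivAt (hball z hzb)
    rw [hw z, zero_div] at this
    exact this
  have hc : ∀ z ∈ Metric.ball z₀ δ, h z / g z = h z₀ / g z₀ := by
    intro z hzb
    refine Metric.isOpen_ball.is_const_of_deriv_eq_zero (𝕜 := ℂ) (f := fun z => h z / g z)
      (convex_ball z₀ δ).isPreconnected
      (fun w hw => (hd w hw).differentiableAt.differentiableWithinAt)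
      (fun w hw => (hd w hw).deriv) hzb (Metric.mem_ball_self hδ)
  have hev : h =ᶠ[𝓝 z₀] fun z => h z₀ / g z₀ * g z := by
    filter_upwards [Metric.ball_mem_nhds z₀ hδ] with z hzb
    rw [← hc z hzb, div_mul_cancel₀ _ (hball z hzb)]
  have a1 : AnalyticOnNhd ℂ h Set.univ := fun z _ => hh.analyticAt z
  have a2 : AnalyticOnNhd ℂ (fun z => h z₀ / g z₀ * g z) Set.univ :=
    fun z _ => (hg.const_mul _).analyticAt z
  exact fun z => congrFun (a1.eq_of_eventuallyEq a2 hev) z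

/-- rotated solutions -/
lemma rotated (F : ℂ → ℂ) (hF : Differentiable ℂ F) (a : ℂ) :
    Differentiable ℂ (fun z => F (a * z)) ∧
    ∀ z, deriv (deriv (fun z => F (a * z))) z = a ^ 2 * deriv (deriv F) (a * z) := by
  have gen : ∀ G : ℂ → ℂ, Differentiable ℂ G → ∀ z,
      HasDerivAt (fun z => G (a * z)) (a * deriv G (a * z)) z := by
    intro G hG z
    have h1 : HasDerivAt (fun z : ℂ => a * z) a z := by
      simpa using (hasDerivAt_id z).const_mul a
    have := (hG (a * z)).hasDerivAt.comp z h1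
    rw [mul_comm] at this
    exact this
  refine ⟨fun z => (gen F hF z).differentiableAt, fun z => ?_⟩
  have : deriv (fun z => F (a * z)) = fun z => a * deriv F (a * z) :=
    funext fun z => (gen F hF z).deriv
  rw [this]
  rw [((gen (deriv F) hF.deriv z).const_mul a).deriv]
  ring

/-- The Stokes relation `f₋ + ω f₊ = C(λ) f` with `ω = e^{2πi/5}`. -/
theorem stokes_relation (f : ℂ → ℂ → ℂ) (hf : IsStdSolutionFamily f)
    (ω : ℂ) (hω : ω = Complex.exp (2 * Real.pi * Complex.I / 5)) :
    ∀ lam : ℂ, ∃ C : ℂ, ∀ z : ℂ,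
      f (ω * z) (ω ^ 3 * lam) + ω * f (ω⁻¹ * z) ((ω⁻¹) ^ 3 * lam) = C * f z lam := by
  intro lam
  have hω5 : ω ^ 5 = 1 := by
    rw [hω, ← Complex.exp_nat_mul, ← Complex.exp_two_pi_mul_I]
    congr 1; push_cast; ring
  have hω0 : ω ≠ 0 := by rw [hω]; exact exp_ne_zero _
  have hωi5 : (ω⁻¹) ^ 5 = 1 := by rw [inv_pow, hω5, inv_one]
  have hpi := Real.pi_pos
  set g : ℂ → ℂ := fun z => f z lam with hgdef
  set p : ℂ → ℂ := fun z => f (ω * z) (ω ^ 3 * lam) with hp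
  set q : ℂ → ℂ := fun z => f (ω⁻¹ * z) ((ω⁻¹) ^ 3 * lam) with hq
  obtain ⟨hg, hg2⟩ := hf.1 lam
  obtain ⟨hpd, hp2⟩ := rotated _ (hf.1 (ω ^ 3 * lam)).1 ω
  obtain ⟨hqd, hq2⟩ := rotated _ (hf.1 ((ω⁻¹) ^ 3 * lam)).1 ω⁻¹
  have hp2' : ∀ z, deriv (deriv p) z = (z ^ 3 + lam) * p z := by
    intro z
    rw [hp2 z, (hf.1 (ω ^ 3 * lam)).2]
    simp only [hp]
    linear_combination (z ^ 3 + lam) * f (ω * z) (ω ^ 3 * lam) * hω5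
  have hq2' : ∀ z, deriv (deriv q) z = (z ^ 3 + lam) * q z := by
    intro z
    rw [hq2 z, (hf.1 ((ω⁻¹) ^ 3 * lam)).2]
    simp only [hq]
    linear_combination (z ^ 3 + lam) * f (ω⁻¹ * z) ((ω⁻¹) ^ 3 * lam) * hωi5
  set h : ℂ → ℂ := fun z => p z + ω * q z with hh
  have hhd : Differentiable ℂ h := hpd.add (hqd.const_mul ω)
  have hdh : deriv h = fun z => deriv p z + ω * deriv q z :=
    funext fun z => ((hpd z).hasDerivAt.add ((hqd z).hasDerivAt.const_mul ω)).deriv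
  have hh2 : ∀ z, deriv (deriv h) z = (z ^ 3 + lam) * h z := by
    intro z
    have e : deriv (fun z => deriv p z + ω * deriv q z) z =
        deriv (deriv p) z + ω * deriv (deriv q) z :=
      ((hpd.deriv z).hasDerivAt.add ((hqd.deriv z).hasDerivAt.const_mul ω)).deriv
    rw [hdh, e, hp2', hq2']
    simp only [hh]; ring
  obtain ⟨c, hc⟩ := wronskian_const h g (fun z => z ^ 3 + lam) hhd hg hh2 hg2
  -- asymptotics on the three rays
  have A := ray f hf lam 0 (by simp; positivity)
  have B := ray f hf (ω ^ 3 * lam) (2 * Real.pi / 5) (by rw [abs_of_pos (by positivity)])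
  have D := ray f hf ((ω⁻¹) ^ 3 * lam) (-(2 * Real.pi / 5))
    (by rw [abs_neg, abs_of_pos (by positivity)])
  have w1 : exp (((2 * Real.pi / 5 : ℝ) : ℂ) * I) = ω := by
    rw [hω]; congr 1; push_cast; ring
  have w2 : exp (((-(2 * Real.pi / 5) : ℝ) : ℂ) * I) = ω⁻¹ := by
    rw [hω, ← Complex.exp_neg]; congr 1; push_cast; ring
  have w3 : exp (5 / 2 * (((2 * Real.pi / 5 : ℝ) : ℂ) * I)) = -1 := by
    rw [← Complex.exp_pi_mul_I]; congr 1; push_cast; ring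
  have w4 : exp (5 / 2 * (((-(2 * Real.pi / 5) : ℝ) : ℂ) * I)) = -1 := by
    rw [← inv_neg_one, ← Complex.exp_pi_mul_I, ← Complex.exp_neg]; congr 1; push_cast; ring
  set σ : ℂ := exp (3 / 4 * (((2 * Real.pi / 5 : ℝ) : ℂ) * I)) with hσ
  have w5 : exp (3 / 4 * (((-(2 * Real.pi / 5) : ℝ) : ℂ) * I)) = σ⁻¹ := by
    rw [hσ, ← Complex.exp_neg]; congr 1; push_cast; ring
  have hσ0 : σ ≠ 0 := exp_ne_zero _
  have hσω : σ ^ 2 * ω = -1 := by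
    rw [hσ, hω, ← Complex.exp_nat_mul, ← Complex.exp_add, ← Complex.exp_pi_mul_I]
    congr 1; push_cast; ring
  rw [w1, w3] at B
  rw [w2, w4, w5] at D
  simp only [ofReal_zero, zero_mul, mul_zero, Complex.exp_zero, mul_one] at A
  set P : ℝ → ℂ := fun r => ((r ^ (3 / 4 : ℝ) : ℝ) : ℂ) with hP
  set S : ℝ → ℂ := fun r => exp ((2 / 5 : ℂ) * ((r ^ (5 / 2 : ℝ) : ℝ) : ℂ)) with hS
  set a : ℝ → ℂ := fun r => g r * P r * S r with ha
  have A' : Tendsto a atTop (𝓝 1) := A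
  have hS0 : ∀ r, S r ≠ 0 := fun r => exp_ne_zero _
  have H : Tendsto (fun r : ℝ => h r * P r / S r) atTop (𝓝 0) := by
    have := (B.const_mul σ⁻¹).add (D.const_mul (ω * σ))
    have e : σ⁻¹ * 1 + ω * σ * 1 = 0 := by
      field_simp; linear_combination hσω
    rw [e] at this
    refine this.congr fun r => ?_
    have hneg : exp ((2 / 5 : ℂ) * (((r ^ (5 / 2 : ℝ) : ℝ) : ℂ) * -1)) = (S r)⁻¹ := by
      rw [hS, ← Complex.exp_neg]; congr 1; ring
    rw [hneg, mul_comm (r : ℂ) ω, mul_comm (r : ℂ) ω⁻¹]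
    simp only [hh, hp, hq, hP]
    have := hS0 r
    field_simp
  set E : ℝ → ℝ := fun r => Real.exp (4 / 5 * r ^ (5 / 2 : ℝ)) with hE
  set E' : ℝ → ℝ := fun r => Real.exp (4 / 5 * r ^ (5 / 2 : ℝ)) * (2 * r ^ (3 / 2 : ℝ)) with hE'
  have hES : ∀ r, (E r : ℂ) = S r ^ 2 := by
    intro r
    simp only [hE, hS]
    rw [ofReal_exp, ← Complex.exp_nat_mul]; congr 1; push_cast; ring
  have hP2 : ∀ r : ℝ, 0 < r → ((r ^ (3 / 2 : ℝ) : ℝ) : ℂ) = P r ^ 2 := by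
    intro r hr
    simp only [hP]
    rw [← ofReal_pow, ← Real.rpow_natCast, ← Real.rpow_mul hr.le]
    norm_num
  have hP0 : ∀ r : ℝ, 0 < r → P r ≠ 0 := by
    intro r hr
    simp only [hP]
    exact_mod_cast (Real.rpow_pos_of_pos hr _).ne'
  have hane : ∀ᶠ r in atTop, a r ≠ 0 := A'.eventually_ne one_ne_zero
  have hc0 : c / 2 = 0 := by
    refine lhop (fun r : ℝ => h r / g r) E E' (fun r => c / 2 * (a r ^ 2)⁻¹) (c / 2)
      ?_ ?_ ?_ ?_ ?_ ?_
    · filter_upwards [eventually_gt_atTop 0] with r hr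
      have := ((Real.hasDerivAt_rpow_const (p := 5 / 2) (Or.inl hr.ne')).const_mul (4 / 5)).exp
      convert this using 1
      simp only [hE']
      norm_num
      ring
    · filter_upwards [eventually_gt_atTop 0] with r hr
      simp only [hE']; positivity
    · filter_upwards [eventually_gt_atTop 0, hane] with r hr har
      have hgr : g r ≠ 0 := by
        intro h0; apply har; simp only [ha, h0, zero_mul]
      have := ((hhd r).hasDerivAt.div (hg r).hasDerivAt hgr).comp_ofReal
      refine HasDerivAt.congr_deriv this ?_
      have e1 : (E' r : ℂ) = 2 * S r ^ 2 * P r ^ 2 := by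
        rw [← hES, ← hP2 r hr]; simp only [hE', hE]; push_cast; ring
      have e2 := hc r
      rw [e1]
      have := hS0 r
      have := hP0 r hr
      symm
      change 2 * S r ^ 2 * P r ^ 2 * (c / 2 * (a r ^ 2)⁻¹) = (deriv h r * g r - h r * deriv g r) / g r ^ 2
      rw [e2]
      simp only [ha]
      field_simp
    · have := ((A'.pow 2).inv₀ (by norm_num)).const_mul (c / 2)
      simpa using this
    · exact Real.tendsto_exp_atTop.comp
        ((tendsto_rpow_atTop (by norm_num)).const_mul_atTop (by norm_num))
    · have := H.div A' one_ne_zero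
      rw [zero_div] at this
      refine this.congr' ?_
      filter_upwards [eventually_gt_atTop 0, hane] with r hr har
      have hgr : g r ≠ 0 := by
        intro h0; apply har; simp only [ha, h0, zero_mul]
      have := hS0 r
      have := hP0 r hr
      simp only [Pi.div_apply, ha, hES]
      field_simp
  have hc0' : c = 0 := by simpa using hc0
  obtain ⟨r, hr⟩ := hane.exists
  have hgr : g r ≠ 0 := by
    intro h0; apply hr; simp only [ha, h0, zero_mul]
  exact prop_of_wronskian h g hhd hg r hgr (fun z => by rw [hc z, hc0'])
end

section
/- Let f be a standard solution family, set ω = e^{2πi/5}, α = e^{iπ/10}, ψ₊(z,λ) = f(α·z, −α^{−2}·λ) and ψ₋(z,λ) = f(−α^{−1}·z, −α²·λ). Then for every δ > 0 there exists R > 0 such that for all λ ∈ ℂ with |λ| ≥ R and |arg λ| ≤ π − δ: if ψ₋(0,λ) = −ω·ψ₊(0,λ), then λ is an eigenvalue of the imaginary cubic oscillator. -/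
open Complex MeasureTheory

/-- `lam` is an eigenvalue of the imaginary cubic oscillator `H = p² + i x³`. -/
def IsEigenvalueICO (lam : ℂ) : Prop :=
  ∃ ψ : ℝ → ℂ, ψ ≠ 0 ∧ ContDiff ℝ 2 ψ ∧
    Integrable (fun x : ℝ => ‖ψ x‖ ^ 2) ∧
    ∀ x : ℝ, -(deriv (deriv ψ) x) + Complex.I * (x : ℂ) ^ 3 * ψ x = lam * ψ x

lemma ray_cpow (x : ℝ) (hx : 0 < x) (θ s : ℝ) (h1 : -Real.pi < θ) (h2 : θ ≤ Real.pi) :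
    ((x : ℂ) * Complex.exp (θ * I)) ^ (s : ℂ) = ((x ^ s : ℝ) : ℂ) * Complex.exp ((s * θ : ℝ) * I) := by
  have hx' : (x : ℂ) ≠ 0 := by exact_mod_cast hx.ne'
  have e : (x : ℂ) * Complex.exp (θ * I) = Complex.exp ((Real.log x : ℝ) + θ * I) := by
    rw [Complex.exp_add, ← Complex.ofReal_exp, Real.exp_log hx]
  rw [e, Complex.cpow_def_of_ne_zero (Complex.exp_ne_zero _),
    Complex.log_exp (by simpa using h1) (by simpa using h2),
    Real.rpow_def_of_pos hx, Complex.ofReal_exp, ← Complex.exp_add]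
  congr 1
  push_cast
  ring

lemma ray_tendsto (f : ℂ → ℂ → ℂ) (hf : IsStdSolutionFamily f) (lam : ℂ) (θ : ℝ)
    (hθ : |θ| ≤ Real.pi / 2) :
    Filter.Tendsto (fun x : ℝ => f ((x : ℂ) * Complex.exp (θ * I)) lam
      * (((x ^ (3 / 4 : ℝ) : ℝ) : ℂ) * Complex.exp ((3 / 4 * θ : ℝ) * I))
      * Complex.exp ((2 / 5 : ℂ) * (((x ^ (5 / 2 : ℝ) : ℝ) : ℂ)
        * Complex.exp ((5 / 2 * θ : ℝ) * I)))) Filter.atTop (nhds 1) := by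
  have hpi := Real.pi_pos
  obtain ⟨C, hC, R, hR, h⟩ := hf.2 (Real.pi / 10) (by positivity) {lam} isCompact_singleton
  rw [tendsto_iff_norm_sub_tendsto_zero]
  have hlim : Filter.Tendsto (fun x : ℝ => C * x ^ (-(1 / 2) : ℝ)) Filter.atTop (nhds 0) := by
    simpa using (tendsto_rpow_neg_atTop (y := 1 / 2) (by norm_num)).const_mul C
  refine squeeze_zero' (Filter.Eventually.of_forall fun x => norm_nonneg _) ?_ hlim
  filter_upwards [Filter.eventually_ge_atTop R] with x hx
  have hx0 : 0 < x := lt_of_lt_of_le hR hx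
  obtain ⟨ha, hb⟩ := abs_le.1 hθ
  have h1 : -Real.pi < θ := by linarith
  have h2 : θ ≤ Real.pi := by linarith
  have hn : ‖(x : ℂ) * Complex.exp (θ * I)‖ = x := by
    rw [norm_mul, Complex.norm_exp_ofReal_mul_I, mul_one, Complex.norm_real, Real.norm_eq_abs,
      abs_of_pos hx0]
  have harg : Complex.arg ((x : ℂ) * Complex.exp (θ * I)) = θ := by
    rw [Complex.exp_mul_I]
    exact Complex.arg_mul_cos_add_sin_mul_I hx0 ⟨h1, h2⟩
  have := h lam rfl ((x : ℂ) * Complex.exp (θ * I)) (by rw [hn]; exact hx)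
    (by rw [harg]; linarith)
  rw [hn] at this
  have e1 := ray_cpow x hx0 θ (3 / 4) h1 h2
  have e2 := ray_cpow x hx0 θ (5 / 2) h1 h2
  rw [show (((3 / 4 : ℝ)) : ℂ) = (3 : ℂ) / 4 by push_cast; rfl] at e1
  rw [show (((5 / 2 : ℝ)) : ℂ) = (5 : ℂ) / 2 by push_cast; rfl] at e2
  rw [e1, e2] at this
  exact this

lemma ray_decay (f : ℂ → ℂ → ℂ) (hf : IsStdSolutionFamily f) (lam : ℂ) (θ : ℝ)
    (hθ : |θ| ≤ Real.pi / 10) :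
    ∀ᶠ x : ℝ in Filter.atTop, ‖f ((x : ℂ) * Complex.exp (θ * I)) lam‖ * x ^ 5 ≤ 100 := by
  have hpi := Real.pi_pos
  have ht := (ray_tendsto f hf lam θ (by linarith)).norm
  rw [norm_one] at ht
  filter_upwards [ht.eventually_le_const (show (1 : ℝ) < 2 by norm_num),
    Filter.eventually_ge_atTop 1] with x hx hx1
  have hx0 : 0 < x := by linarith
  rw [norm_mul, norm_mul, norm_mul, Complex.norm_exp_ofReal_mul_I, mul_one, Complex.norm_real,
    Complex.norm_exp, Real.norm_eq_abs, abs_of_nonneg (by positivity)] at hx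
  have hcos : 1 / 2 ≤ Real.cos (5 / 2 * θ) := by
    rw [← Real.cos_abs, ← Real.cos_pi_div_three]
    apply Real.cos_le_cos_of_nonneg_of_le_pi (abs_nonneg _) (by linarith)
    rw [abs_mul, abs_of_pos (by norm_num : (0 : ℝ) < 5 / 2)]
    linarith
  have hre : ((2 / 5 : ℂ) * (((x ^ (5 / 2 : ℝ) : ℝ) : ℂ)
        * Complex.exp ((5 / 2 * θ : ℝ) * I))).re = 2 / 5 * (x ^ (5 / 2 : ℝ) * Real.cos (5 / 2 * θ)) := by
    rw [show (2 / 5 : ℂ) = ((2 / 5 : ℝ) : ℂ) by push_cast; rfl, Complex.re_ofReal_mul,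
      Complex.re_ofReal_mul, Complex.exp_ofReal_mul_I_re]
  rw [hre] at hx
  set y : ℝ := x ^ (5 / 2 : ℝ) with hy
  have hy0 : 0 ≤ y := by positivity
  have hy2 : y ^ 2 = x ^ 5 := by
    rw [hy, ← Real.rpow_natCast, ← Real.rpow_mul hx0.le, ← Real.rpow_natCast]
    norm_num
  have hE : x ^ 5 / 50 ≤ Real.exp (2 / 5 * (y * Real.cos (5 / 2 * θ))) := by
    have h1 : y / 5 ≤ 2 / 5 * (y * Real.cos (5 / 2 * θ)) := by nlinarith
    have h2 := Real.quadratic_le_exp_of_nonneg (show 0 ≤ y / 5 by positivity)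
    have h3 := Real.exp_le_exp.2 h1
    nlinarith
  have hp : 1 ≤ x ^ (3 / 4 : ℝ) := Real.one_le_rpow hx1 (by norm_num)
  have hN := norm_nonneg (f ((x : ℂ) * Complex.exp (θ * I)) lam)
  set N := ‖f ((x : ℂ) * Complex.exp (θ * I)) lam‖
  have : N * (x ^ 5 / 50) ≤ N * x ^ (3 / 4 : ℝ) * Real.exp (2 / 5 * (y * Real.cos (5 / 2 * θ))) := by
    gcongr
    nlinarith
  linarith

/-- `g` is entire with derivative `g1` and `g'' = (z^3 + μ) g`. -/
def Sol (μ : ℂ) (g g1 : ℂ → ℂ) : Prop :=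
  (∀ z, HasDerivAt g (g1 z) z) ∧ ∀ z, HasDerivAt g1 ((z ^ 3 + μ) * g z) z

lemma Sol.of_family (f : ℂ → ℂ → ℂ) (hf : IsStdSolutionFamily f) (μ : ℂ) :
    Sol μ (fun z => f z μ) (deriv (fun z => f z μ)) := by
  obtain ⟨hd, h2⟩ := hf.1 μ
  refine ⟨fun z => (hd z).hasDerivAt, fun z => ?_⟩
  have := (hd.deriv z).hasDerivAt
  rwa [h2 z] at this

/-- Dirichlet solutions that decay do not exist off the negative axis. -/
lemma sol_zero_ne (f : ℂ → ℂ → ℂ) (hf : IsStdSolutionFamily f) (lam : ℂ)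
    (hlam : lam ∈ Complex.slitPlane) : f 0 lam ≠ 0 := by
  intro h0
  obtain ⟨hv, hv1⟩ := Sol.of_family f hf lam
  set v := fun z => f z lam with hvdef
  set v1 := deriv v
  -- the multiplier
  obtain ⟨c, hc, hcl⟩ : ∃ c : ℂ, 0 < c.re ∧ 0 < (c * lam).re := by
    rcases hlam with h | h
    · exact ⟨1, by simp, by simpa using h⟩
    · refine ⟨⟨lam.im ^ 2, lam.im * (lam.re - 1) - lam.im * 0 ⟩, by positivity, ?_⟩
      simp only [Complex.mul_re]
      have : 0 < lam.im ^ 2 := by positivity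
      nlinarith
  have hvr : ∀ x : ℝ, HasDerivAt (fun x : ℝ => v x) (v1 x) x := fun x => (hv x).comp_ofReal
  have hv1r : ∀ x : ℝ, HasDerivAt (fun x : ℝ => v1 x) (((x : ℂ) ^ 3 + lam) * v x) x :=
    fun x => (hv1 x).comp_ofReal
  have hdec : ∀ᶠ x : ℝ in Filter.atTop, ‖v x‖ * x ^ 5 ≤ 100 := by
    have := ray_decay f hf lam 0 (by simpa using (by positivity : 0 ≤ Real.pi / 10))
    simpa using this
  obtain ⟨X, hX⟩ := Filter.eventually_atTop.1 hdec
  set Y := max X 1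
  set K := 100 * (1 + ‖lam‖) with hK
  have hvb : ∀ x : ℝ, Y ≤ x → ‖v x‖ * x ≤ 100 := by
    intro x hx
    have h1 : 1 ≤ x := le_trans (le_max_right _ _) hx
    have h2 := hX x (le_trans (le_max_left _ _) hx)
    have h3 : x ≤ x ^ 5 := le_self_pow₀ h1 (by norm_num)
    nlinarith [norm_nonneg (v x)]
  have hvb' : ∀ x : ℝ, Y ≤ x → ‖v x‖ ≤ 100 := by
    intro x hx
    have h1 : 1 ≤ x := le_trans (le_max_right _ _) hx
    nlinarith [norm_nonneg (v x), hvb x hx]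
  have hv2b : ∀ x : ℝ, Y ≤ x → ‖((x : ℂ) ^ 3 + lam) * v x‖ ≤ K := by
    intro x hx
    have h1 : 1 ≤ x := le_trans (le_max_right _ _) hx
    have h2 := hX x (le_trans (le_max_left _ _) hx)
    have h3 : x ^ 3 ≤ x ^ 5 := pow_le_pow_right₀ h1 (by norm_num)
    have h4 : 1 ≤ x ^ 5 := one_le_pow₀ h1
    have h5 : ‖(x : ℂ) ^ 3 + lam‖ ≤ x ^ 3 + ‖lam‖ := by
      refine (norm_add_le _ _).trans ?_
      rw [norm_pow, Complex.norm_real, Real.norm_eq_abs, abs_of_pos (by linarith)]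
    rw [norm_mul]
    calc _ ≤ (x ^ 3 + ‖lam‖) * ‖v x‖ := by gcongr
      _ ≤ (x ^ 5 * (1 + ‖lam‖)) * ‖v x‖ := by
        gcongr
        nlinarith [norm_nonneg lam]
      _ = (‖v x‖ * x ^ 5) * (1 + ‖lam‖) := by ring
      _ ≤ K := by rw [hK]; gcongr
  have hv1b : ∀ x : ℝ, Y ≤ x → ‖v1 x‖ ≤ 200 + K := by
    intro x hx
    have hK0 : 0 ≤ K := (norm_nonneg _).trans (hv2b x hx)
    have key : ∀ t ∈ Set.Icc x (x + 1), ‖v1 t - v1 x‖ ≤ K := by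
      intro t ht
      have := (convex_Icc x (x + 1)).norm_image_sub_le_of_norm_hasDerivWithin_le
        (f := fun x : ℝ => v1 x) (C := K)
        (fun s hs => (hv1r s).hasDerivWithinAt) (fun s hs => hv2b s (hx.trans hs.1))
        (Set.left_mem_Icc.2 (by linarith)) ht
      refine this.trans ?_
      rw [Real.norm_eq_abs, abs_of_nonneg (by linarith [ht.1])]
      nlinarith [ht.2]
    have := (convex_Icc x (x + 1)).norm_image_sub_le_of_norm_hasDerivWithin_le
        (f := fun t : ℝ => v t - (t : ℂ) * v1 x) (f' := fun t : ℝ => v1 t - 1 * v1 x) (C := K)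
        (fun s hs => ((hvr s).sub ((Complex.ofRealCLM.hasDerivAt (x := s)).mul_const
          (v1 x))).hasDerivWithinAt)
        (fun s hs => by simpa using key s hs)
        (Set.left_mem_Icc.2 (by linarith)) (Set.right_mem_Icc.2 (by linarith))
    have h2 : v1 x = v ((x + 1 : ℝ) : ℂ) - v x - ((v ((x + 1 : ℝ) : ℂ) - ((x + 1 : ℝ) : ℂ) * v1 x)
        - (v x - (x : ℂ) * v1 x)) := by push_cast; ring
    have e1 := hvb' x hx
    have e2 := hvb' (x + 1) (by linarith)
    simp only [add_sub_cancel_left, norm_one, mul_one] at this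
    rw [h2]
    refine (norm_sub_le _ _).trans ?_
    have := norm_sub_le (v ((x + 1 : ℝ) : ℂ)) (v x)
    linarith
  -- the monotone quantity
  set G : ℝ → ℝ := fun x => (c * (starRingEnd ℂ (v x) * v1 x)).re with hG
  have hGd : ∀ x : ℝ, HasDerivAt G (c.re * ‖v1 x‖ ^ 2 + (c.re * x ^ 3 + (c * lam).re) * ‖v x‖ ^ 2) x := by
    intro x
    have h1 : HasDerivAt (fun x : ℝ => starRingEnd ℂ (v x)) (starRingEnd ℂ (v1 x)) x :=
      (Complex.conjCLE.toContinuousLinearMap.hasFDerivAt.comp_hasDerivAt x (hvr x))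
    have h2 := ((h1.mul (hv1r x)).const_mul c)
    have h3 := Complex.reCLM.hasFDerivAt.comp_hasDerivAt x h2
    refine h3.congr_deriv ?_
    have e1 : starRingEnd ℂ (v1 x) * v1 x = ((‖v1 x‖ ^ 2 : ℝ) : ℂ) := by
      rw [mul_comm, Complex.mul_conj, Complex.normSq_eq_norm_sq]
    have e2 : starRingEnd ℂ (v x) * v x = ((‖v x‖ ^ 2 : ℝ) : ℂ) := by
      rw [mul_comm, Complex.mul_conj, Complex.normSq_eq_norm_sq]
    have e3 : c * (starRingEnd ℂ (v1 x) * v1 x + starRingEnd ℂ (v x) * (((x : ℂ) ^ 3 + lam) * v x))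
        = ((‖v1 x‖ ^ 2 : ℝ) : ℂ) * c + ((‖v x‖ ^ 2 : ℝ) : ℂ) * (((x ^ 3 : ℝ) : ℂ) * c + c * lam) := by
      rw [← e1, ← e2]; push_cast; ring
    show (c * (starRingEnd ℂ (v1 x) * v1 x + starRingEnd ℂ (v x) * (((x : ℂ) ^ 3 + lam) * v x))).re = _
    rw [e3, Complex.add_re, Complex.re_ofReal_mul, Complex.re_ofReal_mul, Complex.add_re,
      Complex.re_ofReal_mul]
    ring
  have hmono : MonotoneOn G (Set.Ici 0) := by
    apply monotoneOn_of_deriv_nonneg (convex_Ici 0)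
      (fun x _ => (hGd x).continuousAt.continuousWithinAt)
      (fun x _ => (hGd x).differentiableAt.differentiableWithinAt)
    intro x hx
    rw [interior_Ici] at hx
    have hx : 0 < x := hx
    rw [(hGd x).deriv]
    positivity
  have hG0 : G 0 = 0 := by
    simp only [hG]
    have : v ((0 : ℝ) : ℂ) = 0 := by simpa [hvdef] using h0
    rw [this]; simp
  have hGlim : Filter.Tendsto G Filter.atTop (nhds 0) := by
    have hlim : Filter.Tendsto (fun x : ℝ => (‖c‖ * 100 * (200 + K)) * x⁻¹) Filter.atTop (nhds 0) := by
      simpa using tendsto_inv_atTop_zero.const_mul (‖c‖ * 100 * (200 + K))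
    refine squeeze_zero_norm' ?_ hlim
    filter_upwards [Filter.eventually_ge_atTop Y] with x hx
    have h1 : 1 ≤ x := le_trans (le_max_right _ _) hx
    have hK0 : 0 ≤ K := (norm_nonneg _).trans (hv2b x hx)
    have hvx : ‖v x‖ ≤ 100 * x⁻¹ := by
      rw [← div_eq_mul_inv, le_div_iff₀ (by linarith)]; exact hvb x hx
    refine (Complex.abs_re_le_norm _).trans ?_
    rw [norm_mul, norm_mul, RCLike.norm_conj]
    calc _ ≤ ‖c‖ * ((100 * x⁻¹) * (200 + K)) := by gcongr; exact hv1b x hx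
      _ = _ := by ring
  have hGz : ∀ x : ℝ, 0 ≤ x → G x = 0 := by
    intro x hx
    apply le_antisymm
    · refine ge_of_tendsto hGlim ?_
      filter_upwards [Filter.eventually_ge_atTop x] with y hy
      exact hmono hx (hx.trans hy : (0:ℝ) ≤ y) hy
    · rw [← hG0]; exact hmono (le_refl (0:ℝ)) hx hx
  have hvz : ∀ x : ℝ, 0 < x → v x = 0 := by
    intro x hx
    have h1 : G =ᶠ[nhds x] fun _ => 0 := by
      filter_upwards [lt_mem_nhds hx] with y hy using hGz y hy.le
    have h2 := h1.deriv_eq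
    rw [(hGd x).deriv, deriv_const] at h2
    have h3 : 0 < c.re * x ^ 3 + (c * lam).re := by positivity
    have h4 : 0 ≤ c.re * ‖v1 x‖ ^ 2 := by positivity
    have h5 : ‖v x‖ ^ 2 = 0 := by nlinarith [sq_nonneg ‖v x‖]
    simpa using h5
  have ht := ray_tendsto f hf lam 0 (by simpa using (by positivity : 0 ≤ Real.pi / 2))
  have : Filter.Tendsto (fun _ : ℝ => (0 : ℂ)) Filter.atTop (nhds 1) := by
    refine ht.congr' ?_
    filter_upwards [Filter.eventually_gt_atTop 0] with x hx
    have : f x lam = 0 := hvz x hx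
    simp [this]
  exact zero_ne_one (tendsto_nhds_unique tendsto_const_nhds this)

lemma Sol.scale {μ : ℂ} {g g1 : ℂ → ℂ} (h : Sol μ g g1) (c ν : ℂ) (h5 : c ^ 5 = 1)
    (hν : c ^ 2 * μ = ν) : Sol ν (fun z => g (c * z)) (fun z => c * g1 (c * z)) := by
  have hc : ∀ z : ℂ, HasDerivAt (fun z => c * z) c z := fun z => by
    simpa using (hasDerivAt_id z).const_mul c
  refine ⟨fun z => ?_, fun z => ?_⟩
  · exact ((h.1 (c * z)).comp z (hc z)).congr_deriv (by ring)
  · refine (((h.2 (c * z)).comp z (hc z)).const_mul c).congr_deriv ?_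
    rw [← hν]
    linear_combination (z ^ 3 * g (c * z)) * h5

lemma Sol.add_mul {μ : ℂ} {g g1 k k1 : ℂ → ℂ} (h : Sol μ g g1) (h' : Sol μ k k1) (c : ℂ) :
    Sol μ (fun z => g z + c * k z) (fun z => g1 z + c * k1 z) :=
  ⟨fun z => (h.1 z).add ((h'.1 z).const_mul c),
    fun z => ((h.2 z).add ((h'.2 z).const_mul c)).congr_deriv (by ring)⟩

/-- The Wronskian of a solution with cancelled growth and the subdominant one vanishes. -/
lemma sol_wronskian {μ : ℂ} {v v1 u u1 : ℂ → ℂ} (hv : Sol μ v v1) (hu : Sol μ u u1)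
    (htv : Filter.Tendsto (fun x : ℝ => v x * ((x ^ (3 / 4 : ℝ) : ℝ) : ℂ)
      * ((Real.exp (2 / 5 * x ^ (5 / 2 : ℝ)) : ℝ) : ℂ)) Filter.atTop (nhds 1))
    (htu : Filter.Tendsto (fun x : ℝ => u x * ((x ^ (3 / 4 : ℝ) : ℝ) : ℂ)
      / ((Real.exp (2 / 5 * x ^ (5 / 2 : ℝ)) : ℝ) : ℂ)) Filter.atTop (nhds 0)) :
    ∀ z, u1 z * v z - u z * v1 z = 0 := by
  have hWd : ∀ z, HasDerivAt (fun z => u1 z * v z - u z * v1 z) 0 z := fun z =>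
    (((hu.2 z).mul (hv.1 z)).sub ((hu.1 z).mul (hv.2 z))).congr_deriv (by ring)
  have hWc : ∀ z, u1 z * v z - u z * v1 z = u1 0 * v 0 - u 0 * v1 0 := fun z =>
    is_const_of_deriv_eq_zero (fun z => (hWd z).differentiableAt) (fun z => (hWd z).deriv) z 0
  set W := u1 0 * v 0 - u 0 * v1 0
  intro z
  rw [hWc z]
  by_contra hW
  set E : ℝ → ℝ := fun x => Real.exp (2 / 5 * x ^ (5 / 2 : ℝ)) with hE
  set p : ℝ → ℝ := fun x => x ^ (3 / 4 : ℝ) with hp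
  have hEpos : ∀ x, 0 < E x := fun x => Real.exp_pos _
  set P : ℝ → ℂ := fun x => v x * (p x : ℂ) * (E x : ℂ) with hP
  set S : ℝ → ℂ := fun x => u x * (p x : ℂ) / (E x : ℂ) with hS
  have hP1 : Filter.Tendsto (fun x => (1 / P x ^ 2).re) Filter.atTop (nhds 1) := by
    have h1 : Filter.Tendsto (fun x => 1 / P x ^ 2) Filter.atTop (nhds (1 / 1 ^ 2)) :=
      tendsto_const_nhds.div (htv.pow 2) (by norm_num)
    have := (Complex.continuous_re.tendsto _).comp h1
    rw [show (1 / 1 ^ 2 : ℂ).re = 1 by norm_num] at this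
    exact this
  have hP2 : Filter.Tendsto (fun x => ‖S x / P x / W‖) Filter.atTop (nhds 0) := by
    have h1 : Filter.Tendsto (fun x => S x / P x / W) Filter.atTop (nhds (0 / 1 / W)) :=
      (htu.div htv one_ne_zero).div_const W
    simpa using h1.norm
  obtain ⟨X, hX⟩ := Filter.eventually_atTop.1
    (((hP1.eventually_const_le (show (1 / 2 : ℝ) < 1 by norm_num)).and
    (hP2.eventually_le_const (show (0 : ℝ) < 1 / 8 by norm_num))).and
    (htv.eventually_ne one_ne_zero))
  set Y := max X 1
  have hY1 : ∀ x, Y ≤ x → 0 < x := fun x hx => by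
    have : (1:ℝ) ≤ Y := le_max_right _ _
    linarith
  have hYX : ∀ x, Y ≤ x → X ≤ x := fun x hx => (le_max_left _ _).trans hx
  have hvne : ∀ x : ℝ, Y ≤ x → v x ≠ 0 := by
    intro x hx h0
    exact (hX x (hYX x hx)).2 (by simp only [hP]; rw [h0, zero_mul, zero_mul])
  have hpE : ∀ x : ℝ, 0 < x → HasDerivAt (fun x => E x ^ 2 / 4) (p x ^ 2 * E x ^ 2 / 2) x := by
    intro x hx
    have h1 : HasDerivAt (fun x : ℝ => x ^ (5 / 2 : ℝ)) ((5 / 2) * x ^ ((5 / 2 : ℝ) - 1)) x :=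
      Real.hasDerivAt_rpow_const (Or.inl hx.ne')
    have h2 := (((h1.const_mul (2 / 5)).exp).pow 2).div_const 4
    refine h2.congr_deriv ?_
    have : p x ^ 2 = x ^ ((5 / 2 : ℝ) - 1) := by
      rw [hp, ← Real.rpow_natCast, ← Real.rpow_mul hx.le]; norm_num
    rw [this]
    simp only [hE]
    push_cast
    ring
  set h : ℝ → ℝ := fun x => (u x / v x / W).re with hh
  have hhd : ∀ x : ℝ, Y ≤ x → HasDerivAt h (1 / v x ^ 2).re x := by
    intro x hx
    have h1 := (((hu.1 x).comp_ofReal).div ((hv.1 x).comp_ofReal) (hvne x hx)).div_const W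
    have h2 := Complex.reCLM.hasFDerivAt.comp_hasDerivAt x h1
    refine h2.congr_deriv ?_
    rw [hWc x, Complex.reCLM_apply, div_right_comm, div_self hW]
  have hmono : MonotoneOn (fun x => h x - E x ^ 2 / 4) (Set.Ici Y) := by
    have hd : ∀ x : ℝ, Y ≤ x → HasDerivAt (fun x => h x - E x ^ 2 / 4)
      ((1 / v x ^ 2).re - p x ^ 2 * E x ^ 2 / 2) x := fun x hx => (hhd x hx).sub (hpE x (hY1 x hx))
    apply monotoneOn_of_deriv_nonneg (convex_Ici Y)
      (fun x hx => (hd x hx).continuousAt.continuousWithinAt)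
      (fun x hx => (hd x (interior_subset hx)).differentiableAt.differentiableWithinAt)
    intro x hx
    have hx : Y ≤ x := interior_subset hx
    rw [(hd x hx).deriv]
    have hx0 := hY1 x hx
    have hpne : (p x : ℂ) ≠ 0 := by
      have : 0 < p x := Real.rpow_pos_of_pos hx0 _
      exact_mod_cast this.ne'
    have hEne : (E x : ℂ) ≠ 0 := by exact_mod_cast (hEpos x).ne'
    have e1 : 1 / v x ^ 2 = ((p x ^ 2 * E x ^ 2 : ℝ) : ℂ) * (1 / P x ^ 2) := by
      have := hvne x hx
      simp only [hP]
      push_cast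
      field_simp
    rw [e1, Complex.re_ofReal_mul]
    have := (hX x (hYX x hx)).1.1
    have h2 : 0 ≤ p x ^ 2 * E x ^ 2 := by positivity
    nlinarith
  have hbound : ∀ x : ℝ, Y ≤ x → h x ≤ E x ^ 2 / 8 := by
    intro x hx
    have hx0 := hY1 x hx
    have hpne : (p x : ℂ) ≠ 0 := by
      have : 0 < p x := Real.rpow_pos_of_pos hx0 _
      exact_mod_cast this.ne'
    have hEne : (E x : ℂ) ≠ 0 := by exact_mod_cast (hEpos x).ne'
    have e1 : u x / v x / W = ((E x ^ 2 : ℝ) : ℂ) * (S x / P x / W) := by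
      have := hvne x hx
      simp only [hP, hS]
      push_cast
      field_simp
    have h1 := (hX x (hYX x hx)).1.2
    have h2 := Complex.re_le_norm (S x / P x / W)
    simp only [hh]
    rw [e1, Complex.re_ofReal_mul]
    nlinarith [sq_nonneg (E x)]
  have hElim : Filter.Tendsto E Filter.atTop Filter.atTop :=
    Real.tendsto_exp_atTop.comp
      ((tendsto_rpow_atTop (by norm_num : (0 : ℝ) < 5 / 2)).const_mul_atTop (by norm_num))
  obtain ⟨x, hx1, hx2⟩ := ((hElim.eventually_gt_atTop (1 + 8 * |h Y - E Y ^ 2 / 4|)).and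
    (Filter.eventually_ge_atTop Y)).exists
  have a1 := hmono (Set.self_mem_Ici) hx2 hx2
  have a2 := hbound x hx2
  have a3 := neg_abs_le (h Y - E Y ^ 2 / 4)
  have a4 := abs_nonneg (h Y - E Y ^ 2 / 4)
  simp only at a1
  nlinarith

lemma sol_eq_zero {μ : ℂ} {v v1 u u1 : ℂ → ℂ} (hv : Sol μ v v1) (hu : Sol μ u u1)
    (hW : ∀ z, u1 z * v z - u z * v1 z = 0) (hv0 : v 0 ≠ 0) (hu0 : u 0 = 0) : ∀ z, u z = 0 := by
  have hev := (hv.1 0).continuousAt.eventually_ne hv0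
  obtain ⟨r, hr, hball⟩ := Metric.eventually_nhds_iff_ball.1 hev
  have hd : ∀ z ∈ Metric.ball (0 : ℂ) r, HasDerivAt (fun z => u z / v z) 0 z := fun z hz =>
    ((hu.1 z).div (hv.1 z) (hball z hz)).congr_deriv (by rw [hW z, zero_div])
  have hz : ∀ z ∈ Metric.ball (0 : ℂ) r, u z = 0 := by
    intro z hz
    have := (convex_ball (0 : ℂ) r).norm_image_sub_le_of_norm_hasDerivWithin_le (C := 0)
      (fun s hs => (hd s hs).hasDerivWithinAt) (fun s hs => by simp)
      (Metric.mem_ball_self hr) hz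
    simp only [zero_mul, norm_le_zero_iff, hu0, zero_div, sub_zero] at this
    rcases div_eq_zero_iff.1 this with h | h
    · exact h
    · exact absurd h (hball z hz)
  have hdu : Differentiable ℂ u := fun z => (hu.1 z).differentiableAt
  have ha : AnalyticOnNhd ℂ u Set.univ := fun z _ => hdu.analyticAt z
  have : u = 0 := ha.eq_of_eventuallyEq (g := 0) (fun z _ => analyticAt_const) (z₀ := 0)
    (Filter.eventually_of_mem (Metric.ball_mem_nhds _ hr) hz)
  intro z
  rw [this]; rfl

lemma ray_growth (f : ℂ → ℂ → ℂ) (hf : IsStdSolutionFamily f) (lam : ℂ) (θ : ℝ)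
    (hθ : |θ| ≤ Real.pi / 2) (hθ' : Complex.exp ((5 / 2 * θ : ℝ) * I) = -1) :
    Filter.Tendsto (fun x : ℝ => f ((x : ℂ) * Complex.exp (θ * I)) lam
      * ((x ^ (3 / 4 : ℝ) : ℝ) : ℂ) / ((Real.exp (2 / 5 * x ^ (5 / 2 : ℝ)) : ℝ) : ℂ))
      Filter.atTop (nhds (Complex.exp (-(3 / 4 * θ : ℝ) * I))) := by
  have h := (ray_tendsto f hf lam θ hθ).mul_const (Complex.exp (-(3 / 4 * θ : ℝ) * I))
  rw [one_mul] at h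
  refine h.congr fun x => ?_
  have e1 : Complex.exp ((3 / 4 * θ : ℝ) * I) * Complex.exp (-(3 / 4 * θ : ℝ) * I) = 1 := by
    rw [← Complex.exp_add]; simp
  have e2 : Complex.exp ((2 / 5 : ℂ) * (((x ^ (5 / 2 : ℝ) : ℝ) : ℂ) * (-1)))
      = (((Real.exp (2 / 5 * x ^ (5 / 2 : ℝ)) : ℝ) : ℂ))⁻¹ := by
    rw [← Complex.ofReal_inv, ← Real.exp_neg, Complex.ofReal_exp]
    congr 1; push_cast; ring
  rw [hθ', e2, div_eq_mul_inv]
  have key : ∀ F q a b e : ℂ, a * b = 1 → F * (q * a) * e * b = F * q * e := by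
    intro F q a b e hab
    linear_combination (F * q * e) * hab
  exact key _ _ _ _ _ e1

lemma decay_bigO (g : ℝ → ℂ) (h : ∀ᶠ x : ℝ in Filter.atTop, ‖g x‖ * x ^ 5 ≤ 100) :
    (fun x => ‖g x‖ ^ 2) =O[Filter.atTop] fun x : ℝ => (1 + x ^ 2)⁻¹ := by
  refine Asymptotics.IsBigO.of_bound 20000 ?_
  filter_upwards [h, Filter.eventually_ge_atTop 1] with x hx hx1
  have h3 : x ≤ x ^ 5 := le_self_pow₀ hx1 (by norm_num)
  have h4 : ‖g x‖ * x ≤ 100 := by nlinarith [norm_nonneg (g x)]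
  have h5 : (‖g x‖ * x) ^ 2 ≤ 100 ^ 2 := by gcongr
  rw [Real.norm_of_nonneg (by positivity), Real.norm_of_nonneg (by positivity),
    ← div_eq_mul_inv, le_div_iff₀ (by positivity)]
  have h6 : ‖g x‖ ≤ 100 := by nlinarith [norm_nonneg (g x)]
  have h7 : ‖g x‖ ^ 2 ≤ 100 ^ 2 := by gcongr
  linarith [mul_pow ‖g x‖ x 2]

lemma eigen_of_decay (lam : ℂ) (F F1 : ℂ → ℂ) (h1 : ∀ z, HasDerivAt F (F1 z) z)
    (h2 : ∀ z, HasDerivAt F1 ((I * z ^ 3 - lam) * F z) z) (hne : ∃ x : ℝ, F x ≠ 0)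
    (hp : ∀ᶠ x : ℝ in Filter.atTop, ‖F x‖ * x ^ 5 ≤ 100)
    (hm : ∀ᶠ x : ℝ in Filter.atTop, ‖F (-x : ℝ)‖ * x ^ 5 ≤ 100) : IsEigenvalueICO lam := by
  have hd : Differentiable ℂ F := fun z => (h1 z).differentiableAt
  have hcd : ContDiff ℝ 2 (fun x : ℝ => F x) :=
    (hd.contDiff (n := 2)).restrict_scalars ℝ |>.comp Complex.ofRealCLM.contDiff
  refine ⟨fun x => F x, ?_, hcd, ?_, ?_⟩
  · obtain ⟨x, hx⟩ := hne
    exact fun h => hx (congrFun h x)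
  · have hc : Continuous (fun x : ℝ => ‖F x‖ ^ 2) := (hcd.continuous.norm).pow 2
    have hi : Integrable (fun x : ℝ => (1 + x ^ 2)⁻¹) := integrable_inv_one_add_sq
    refine hc.locallyIntegrable.integrable_of_isBigO_atBot_atTop (g := fun x : ℝ => (1 + x ^ 2)⁻¹)
      (g' := fun x : ℝ => (1 + x ^ 2)⁻¹) ?_ (hi.integrableAtFilter _) (decay_bigO _ hp)
      (hi.integrableAtFilter _)
    have := (decay_bigO (fun x : ℝ => F (-x : ℝ)) hm).comp_tendsto Filter.tendsto_neg_atBot_atTop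
    refine this.congr (fun x => ?_) (fun x => ?_) <;> simp
  · intro x
    have e1 : deriv (fun x : ℝ => F x) = fun x : ℝ => F1 x :=
      funext fun x => ((h1 x).comp_ofReal).deriv
    rw [e1, ((h2 x).comp_ofReal).deriv]
    ring

lemma main_aux (f : ℂ → ℂ → ℂ) (hf : IsStdSolutionFamily f)
    (ω : ℂ) (hω : ω = Complex.exp (2 * Real.pi * Complex.I / 5))
    (α : ℂ) (hα : α = Complex.exp (Real.pi * Complex.I / 10)) (lam : ℂ)
    (hlam : lam ∈ Complex.slitPlane)
    (h0 : f 0 (-α ^ 2 * lam) = -ω * f 0 (-(α ^ 2)⁻¹ * lam)) : IsEigenvalueICO lam := by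
  have hα0 : α ≠ 0 := by rw [hα]; exact Complex.exp_ne_zero _
  have hα5 : α ^ 5 = I := by
    refine Eq.trans ?_ Complex.exp_pi_div_two_mul_I
    rw [hα, ← Complex.exp_nat_mul]
    congr 1; push_cast; ring
  have hωα : ω = α ^ 4 := by
    rw [hα, hω, ← Complex.exp_nat_mul]
    congr 1; push_cast; ring
  have hα10 : α ^ 10 = -1 := by
    rw [show α ^ 10 = (α ^ 5) ^ 2 by ring, hα5, Complex.I_sq]
  have hα20 : α ^ 20 = 1 := by
    rw [show α ^ 20 = (α ^ 10) ^ 2 by ring, hα10]; norm_num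
  have hω5 : ω ^ 5 = 1 := by rw [hωα, ← pow_mul, hα20]
  have hω0 : ω ≠ 0 := by rw [hωα]; positivity
  set mm := -α ^ 2 * lam with hmm
  set mp := -(α ^ 2)⁻¹ * lam with hmp
  have hv := Sol.of_family f hf lam
  have hum : Sol lam (fun z => f (ω * z) mm) (fun z => ω * deriv (fun z => f z mm) (ω * z)) :=
    (Sol.of_family f hf mm).scale ω lam hω5 (by
      rw [hmm, hωα]; linear_combination (-lam) * hα10)
  have hup : Sol lam (fun z => f (ω⁻¹ * z) mp) (fun z => ω⁻¹ * deriv (fun z => f z mp) (ω⁻¹ * z)) :=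
    (Sol.of_family f hf mp).scale ω⁻¹ lam (by rw [inv_pow, hω5, inv_one]) (by
      rw [hmp, hωα]; field_simp; linear_combination (-lam) * hα10)
  have hu := hum.add_mul hup ω
  have hpi := Real.pi_pos
  have hωe : Complex.exp ((2 * Real.pi / 5 : ℝ) * I) = ω := by
    rw [hω]; congr 1; push_cast; ring
  have hωe' : Complex.exp ((-(2 * Real.pi / 5) : ℝ) * I) = ω⁻¹ := by
    rw [hω, ← Complex.exp_neg]; congr 1; push_cast; ring
  have htm := ray_growth f hf mm (2 * Real.pi / 5)
    (by rw [abs_of_pos (by positivity)]; linarith)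
    (by rw [← Complex.exp_pi_mul_I]; congr 1; push_cast; ring)
  have htp := ray_growth f hf mp (-(2 * Real.pi / 5))
    (by rw [abs_neg, abs_of_pos (by positivity)]; linarith)
    (by rw [← Complex.exp_neg_pi_mul_I]; congr 1; push_cast; ring)
  rw [hωe] at htm
  rw [hωe'] at htp
  have hsum : Complex.exp (-(3 / 4 * (2 * Real.pi / 5) : ℝ) * I)
      + ω * Complex.exp (-(3 / 4 * (-(2 * Real.pi / 5)) : ℝ) * I) = 0 := by
    have e1 : Complex.exp (-(3 / 4 * (2 * Real.pi / 5) : ℝ) * I) = (α ^ 3)⁻¹ := by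
      rw [hα, ← Complex.exp_nat_mul, ← Complex.exp_neg]
      congr 1; push_cast; ring
    have e2 : Complex.exp (-(3 / 4 * (-(2 * Real.pi / 5)) : ℝ) * I) = α ^ 3 := by
      rw [hα, ← Complex.exp_nat_mul]
      congr 1; push_cast; ring
    rw [e1, e2, hωα]
    field_simp
    linear_combination hα10
  have htu := htm.add (htp.const_mul ω)
  rw [hsum] at htu
  have htv := ray_tendsto f hf lam 0 (by simpa using (by positivity : 0 ≤ Real.pi / 2))
  have hW := sol_wronskian hv hu
    (htv.congr fun x => by
      simp only [mul_zero, Complex.ofReal_zero, zero_mul, Complex.exp_zero, mul_one]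
      rw [Complex.ofReal_exp]; push_cast; rfl)
    (htu.congr fun x => by
      rw [mul_comm (x : ℂ) ω, mul_comm (x : ℂ) ω⁻¹]; ring)
  have hzero := sol_eq_zero hv hu hW (sol_zero_ne f hf lam hlam)
    (by simp only [mul_zero]; rw [h0]; ring)
  have hrel : ∀ z : ℂ, f (-α⁻¹ * z) mm = -ω * f (α * z) mp := by
    intro z
    have := hzero (I * z)
    have e1 : ω * (I * z) = -α⁻¹ * z := by
      rw [hωα, ← hα5]; field_simp; linear_combination z * hα10
    have e2 : ω⁻¹ * (I * z) = α * z := by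
      rw [hωα, ← hα5]; field_simp
    simp only [e1, e2] at this
    linear_combination this
  have hαe : Complex.exp ((Real.pi / 10 : ℝ) * I) = α := by
    rw [hα]; congr 1; push_cast; ring
  have hαe' : Complex.exp ((-(Real.pi / 10) : ℝ) * I) = α⁻¹ := by
    rw [hα, ← Complex.exp_neg]; congr 1; push_cast; ring
  have hαn : ‖ω‖ = 1 := by rw [← hωe, Complex.norm_exp_ofReal_mul_I]
  have hdp := ray_decay f hf mp (Real.pi / 10) (by rw [abs_of_pos (by positivity)])
  have hdm := ray_decay f hf mm (-(Real.pi / 10)) (by rw [abs_neg, abs_of_pos (by positivity)])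
  rw [hαe] at hdp
  rw [hαe'] at hdm
  obtain ⟨g1, g2⟩ := Sol.of_family f hf mp
  have hc : ∀ z : ℂ, HasDerivAt (fun z => α * z) α z := fun z => by
    simpa using (hasDerivAt_id z).const_mul α
  refine eigen_of_decay lam (fun z => f (α * z) mp) (fun z => α * deriv (fun z => f z mp) (α * z))
    (fun z => ((g1 (α * z)).comp z (hc z)).congr_deriv (by ring))
    (fun z => (((g2 (α * z)).comp z (hc z)).const_mul α).congr_deriv ?_) ?_ ?_ ?_
  · have : α ^ 2 * mp = -lam := by rw [hmp]; field_simp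
    linear_combination (z ^ 3 * f (α * z) mp) * hα5 + f (α * z) mp * this
  · have ht := ray_tendsto f hf mp (Real.pi / 10) (by rw [abs_of_pos (by positivity)]; linarith)
    rw [hαe] at ht
    obtain ⟨x, hx⟩ := (ht.eventually_ne one_ne_zero).exists
    refine ⟨x, fun h => hx ?_⟩
    rw [mul_comm] at h
    rw [h]; simp
  · filter_upwards [hdp] with x hx
    rwa [mul_comm α]
  · filter_upwards [hdm] with x hx
    have := hrel ((-x : ℝ) : ℂ)
    have e : -α⁻¹ * ((-x : ℝ) : ℂ) = x * α⁻¹ := by push_cast; ring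
    rw [e] at this
    rw [this, norm_mul, norm_neg, hαn, one_mul] at hx
    exact hx

/-- For `|λ|` large in the sector `|arg λ| ≤ π - δ`, the matching condition
`ψ₋(0,λ) = -ω ψ₊(0,λ)` is sufficient for `λ` to be an eigenvalue. -/
theorem matching_sufficient (f : ℂ → ℂ → ℂ) (hf : IsStdSolutionFamily f)
    (ω : ℂ) (hω : ω = Complex.exp (2 * Real.pi * Complex.I / 5))
    (α : ℂ) (hα : α = Complex.exp (Real.pi * Complex.I / 10))
    (ψp ψm : ℂ → ℂ → ℂ)
    (hψp : ψp = fun z lam => f (α * z) (-(α ^ 2)⁻¹ * lam))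
    (hψm : ψm = fun z lam => f (-α⁻¹ * z) (-α ^ 2 * lam)) :
    ∀ δ > (0 : ℝ), ∃ R > (0 : ℝ), ∀ lam : ℂ,
      R ≤ ‖lam‖ → |Complex.arg lam| ≤ Real.pi - δ →
      ψm 0 lam = -ω * ψp 0 lam → IsEigenvalueICO lam := by
  intro δ hδ
  refine ⟨1, one_pos, fun lam hR harg h => ?_⟩
  subst hψp hψm
  simp only [mul_zero] at h
  refine main_aux f hf ω hω α hα lam ?_ h
  rw [Complex.mem_slitPlane_iff_arg]
  refine ⟨fun h => ?_, fun h => ?_⟩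
  · rw [h, abs_of_pos Real.pi_pos] at harg
    linarith
  · rw [h, norm_zero] at hR
    linarith
end
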